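/- arXiv:1405.5606 — 2 statements merged into one kernel-verified Lean document; each statement's English description precedes it below -/
import Mathlib

section
/- For every m ∈ ℕ, the family of languages of index at most m generated by CD grammar systems with at most three context-free components working in the (t∧=m)-mode is strictly contained in the unrestricted family: L_m(CD_3, CF[−λ], (t∧=m)) ⊊ L(CD_3, CF[−λ], (t∧=m)), both with and without erasing rules. -/
namespace CDHybrid

/-- Symbols: nonterminals are natural numbers, terminals come from `T`. -/
abbrev Symb (T : Type) := ℕ ⊕ T

/-- Sentential forms. -/
abbrev SForm (T : Type) := List (Symb T)

/-- A context-free rule `A → z`. -/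
abbrev Rule (T : Type) := ℕ × SForm T

/-- Number of nonterminal occurrences in a sentential form. -/
def ntCount {T : Type} (x : SForm T) : ℕ := (x.filter Sum.isLeft).length

/-- One rewriting step using some rule of the rule set `P`. -/
def RStep {T : Type} (P : List (Rule T)) (x y : SForm T) : Prop :=
  ∃ r ∈ P, ∃ u v : SForm T, x = u ++ Sum.inl r.1 :: v ∧ y = u ++ r.2 ++ v

/-- `m`-step derivation using only rules of `P`. -/
def StepsN {T : Type} (P : List (Rule T)) : ℕ → SForm T → SForm T → Prop
  | 0, x, y => x = y
  | m + 1, x, y => ∃ z, RStep P x z ∧ StepsN P m z y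

/-- `m`-step derivation using only rules of `P`, all intermediate (and the final)
sentential forms having at most `b` occurrences of nonterminals. -/
def StepsNB {T : Type} (P : List (Rule T)) (b : ℕ) : ℕ → SForm T → SForm T → Prop
  | 0, x, y => x = y
  | m + 1, x, y => ∃ z, RStep P x z ∧ ntCount z ≤ b ∧ StepsNB P b m z y

/-- Derivation modes of CD grammar systems. -/
inductive Mode where
  | eq : ℕ → Mode
  | le : ℕ → Mode
  | ge : ℕ → Mode
  | star : Mode
  | t : Mode
  | conj : Mode → Mode → Mode

/-- The predicate of a derivation mode: `modeOK P f m y` holds if an `m`-step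
derivation by the component `P` ending in `y` is acceptable for mode `f`. -/
def modeOK {T : Type} (P : List (Rule T)) : Mode → ℕ → SForm T → Prop
  | .eq k, m, _ => m = k
  | .le k, m, _ => m ≤ k
  | .ge k, m, _ => k ≤ m
  | .star, _, _ => True
  | .t, _, y => ¬ ∃ z, RStep P y z
  | .conj f g, m, y => modeOK P f m y ∧ modeOK P g m y

/-- A CD grammar system with context-free components. -/
structure CDGS (T : Type) where
  deg : ℕ
  start : ℕ
  comp : Fin deg → List (Rule T)

/-- λ-freeness: no erasing rules. -/
def CDGS.LamFree {T : Type} (G : CDGS T) : Prop :=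
  ∀ i : Fin G.deg, ∀ r ∈ G.comp i, r.2 ≠ []

/-- One derivation step of a component of `G` in mode `f`. -/
def CDGS.ModeStep {T : Type} (G : CDGS T) (f : Mode) (x y : SForm T) : Prop :=
  ∃ i : Fin G.deg, ∃ m : ℕ, StepsN (G.comp i) m x y ∧ modeOK (G.comp i) f m y

/-- One derivation step of a component of `G` in mode `f`, with all produced
sentential forms having at most `b` nonterminal occurrences. -/
def CDGS.ModeStepB {T : Type} (G : CDGS T) (f : Mode) (b : ℕ) (x y : SForm T) : Prop :=
  ∃ i : Fin G.deg, ∃ m : ℕ, StepsNB (G.comp i) b m x y ∧ modeOK (G.comp i) f m y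

/-- The language generated by `G` in mode `f`. -/
def CDGS.lang {T : Type} (G : CDGS T) (f : Mode) : Set (List T) :=
  { w | Relation.TransGen (G.ModeStep f) [Sum.inl G.start] (w.map Sum.inr) }

/-- The words of the language of `G` in mode `f` possessing a derivation of index
at most `b`, i.e., all sentential forms occurring in it have at most `b`
nonterminal occurrences. -/
def CDGS.langB {T : Type} (G : CDGS T) (f : Mode) (b : ℕ) : Set (List T) :=
  { w | ntCount ([Sum.inl G.start] : SForm T) ≤ b ∧
      Relation.TransGen (G.ModeStepB f b) [Sum.inl G.start] (w.map Sum.inr) }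

/-- Two languages are considered equal iff they differ at most in the empty word. -/
def EqL {T : Type} (L₁ L₂ : Set (List T)) : Prop := L₁ \ {[]} = L₂ \ {[]}

/-- The family `L(CD_n, CF[−λ], f)`; `lf = true` forbids erasing rules. -/
def CDFam (T : Type) (lf : Bool) (n : ℕ) (f : Mode) : Set (Set (List T)) :=
  { L | ∃ G : CDGS T, G.deg ≤ n ∧ (lf = true → G.LamFree) ∧ EqL (G.lang f) L }

/-- The family `L(CD_∞, CF[−λ], f)`. -/
def CDFamInf (T : Type) (lf : Bool) (f : Mode) : Set (Set (List T)) :=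
  { L | ∃ G : CDGS T, (lf = true → G.LamFree) ∧ EqL (G.lang f) L }

/-- The family `L_m(CD_n, CF[−λ], f)` of such languages of index at most `m`. -/
def CDFamInd (T : Type) (lf : Bool) (n : ℕ) (f : Mode) (m : ℕ) : Set (Set (List T)) :=
  { L | ∃ G : CDGS T, G.deg ≤ n ∧ (lf = true → G.LamFree) ∧ EqL (G.lang f) L ∧
      G.lang f ⊆ G.langB f m }

/-- The family `L_m(CD_∞, CF[−λ], f)`. -/
def CDFamIndInf (T : Type) (lf : Bool) (f : Mode) (m : ℕ) : Set (Set (List T)) :=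
  { L | ∃ G : CDGS T, (lf = true → G.LamFree) ∧ EqL (G.lang f) L ∧ G.lang f ⊆ G.langB f m }

/-- The family `L_fin(CD_∞, CF[−λ], f)`. -/
def CDFamFinInf (T : Type) (lf : Bool) (f : Mode) : Set (Set (List T)) :=
  { L | ∃ m : ℕ, 1 ≤ m ∧ L ∈ CDFamIndInf T lf f m }

/-- A context-free grammar. -/
structure CFG (T : Type) where
  start : ℕ
  rules : List (Rule T)

/-- The language generated by a context-free grammar. -/
def CFG.lang {T : Type} (G : CFG T) : Set (List T) :=
  { w | Relation.ReflTransGen (RStep G.rules) [Sum.inl G.start] (w.map Sum.inr) }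

/-- The words of `G.lang` having a derivation of index at most `m`. -/
def CFG.langB {T : Type} (G : CFG T) (m : ℕ) : Set (List T) :=
  { w | ntCount ([Sum.inl G.start] : SForm T) ≤ m ∧
      Relation.ReflTransGen (fun x y => RStep G.rules x y ∧ ntCount y ≤ m)
        [Sum.inl G.start] (w.map Sum.inr) }

/-- The family `L(CF)` of context-free languages. -/
def CFFam (T : Type) : Set (Set (List T)) := { L | ∃ G : CFG T, EqL G.lang L }

/-- The family `L_m(CF)` of context-free languages of index at most `m`. -/
def CFFamInd (T : Type) (m : ℕ) : Set (Set (List T)) :=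
  { L | ∃ G : CFG T, EqL G.lang L ∧ G.lang ⊆ G.langB m }

/-- The family `L_fin(CF)` of context-free languages of finite index. -/
def CFFamFin (T : Type) : Set (Set (List T)) :=
  { L | ∃ m : ℕ, 1 ≤ m ∧ L ∈ CFFamInd T m }

/-- A grammar is linear if every right-hand side contains at most one nonterminal. -/
def CFG.Linear {T : Type} (G : CFG T) : Prop := ∀ r ∈ G.rules, ntCount r.2 ≤ 1

/-- The family `L(LIN)` of linear context-free languages. -/
def LinFam (T : Type) : Set (Set (List T)) :=
  { L | ∃ G : CFG T, G.Linear ∧ EqL G.lang L }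

/-- The family `L(FIN)` of finite languages. -/
def FinFam (T : Type) : Set (Set (List T)) := { L | L.Finite }

/-- A programmed grammar with context-free rules. -/
structure PG (T : Type) where
  start : ℕ
  nLab : ℕ
  rule : Fin nLab → Rule T
  succ : Fin nLab → Set (Fin nLab)
  fail : Fin nLab → Set (Fin nLab)

def PG.LamFree {T : Type} (G : PG T) : Prop := ∀ r : Fin G.nLab, (G.rule r).2 ≠ []

/-- No appearance checking: all failure fields are empty. -/
def PG.NoAC {T : Type} (G : PG T) : Prop := ∀ r : Fin G.nLab, G.fail r = ∅

/-- One step of a programmed grammar on pairs (sentential form, label). -/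
def PG.PStep {T : Type} (G : PG T) (p q : SForm T × Fin G.nLab) : Prop :=
  (∃ u v : SForm T, p.1 = u ++ Sum.inl (G.rule p.2).1 :: v ∧
      q.1 = u ++ (G.rule p.2).2 ++ v ∧ q.2 ∈ G.succ p.2) ∨
  (Sum.inl (G.rule p.2).1 ∉ p.1 ∧ q.1 = p.1 ∧ q.2 ∈ G.fail p.2)

/-- The language generated by a programmed grammar. -/
def PG.lang {T : Type} (G : PG T) : Set (List T) :=
  { w | ∃ r₁ r₂ : Fin G.nLab,
      Relation.ReflTransGen G.PStep ([Sum.inl G.start], r₁) (w.map Sum.inr, r₂) }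

/-- The words of `G.lang` having a derivation of index at most `m`. -/
def PG.langB {T : Type} (G : PG T) (m : ℕ) : Set (List T) :=
  { w | ∃ r₁ r₂ : Fin G.nLab, ntCount ([Sum.inl G.start] : SForm T) ≤ m ∧
      Relation.ReflTransGen (fun p q => G.PStep p q ∧ ntCount q.1 ≤ m)
        ([Sum.inl G.start], r₁) (w.map Sum.inr, r₂) }

/-- The family `L_m(P, CF[−λ][, ac])`: programmed languages of index at most `m`;
`ac = false` forbids appearance checking, `lf = true` forbids erasing rules. -/
def PFamInd (T : Type) (lf ac : Bool) (m : ℕ) : Set (Set (List T)) :=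
  { L | ∃ G : PG T, (lf = true → G.LamFree) ∧ (ac = false → G.NoAC) ∧
      EqL G.lang L ∧ G.lang ⊆ G.langB m }

/-- The family `L_fin(P, CF[−λ][, ac])` of programmed languages of finite index. -/
def PFamFin (T : Type) (lf ac : Bool) : Set (Set (List T)) :=
  { L | ∃ m : ℕ, 1 ≤ m ∧ L ∈ PFamInd T lf ac m }


/-! ### Part I: lower bound -/

def skel {T : Type} (x : SForm T) : List ℕ := x.filterMap Sum.getLeft?
def terms {T : Type} (x : SForm T) : List T := x.filterMap Sum.getRight?

def fill {T : Type} : SForm T → List (List T) → List T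
  | [], _ => []
  | Sum.inr a :: x, vs => a :: fill x vs
  | Sum.inl _ :: x, [] => fill x []
  | Sum.inl _ :: x, v :: vs => v ++ fill x vs

theorem skel_append {T : Type} (x y : SForm T) : skel (x ++ y) = skel x ++ skel y := by
  simp [skel]
theorem terms_append {T : Type} (x y : SForm T) : terms (x ++ y) = terms x ++ terms y := by
  simp [terms]
@[simp] theorem skel_inl {T : Type} (A : ℕ) (x : SForm T) :
    skel (Sum.inl A :: x) = A :: skel x := by simp [skel]
@[simp] theorem skel_inr {T : Type} (a : T) (x : SForm T) :
    skel (Sum.inr a :: x) = skel x := rfl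
@[simp] theorem terms_inl {T : Type} (A : ℕ) (x : SForm T) :
    terms (Sum.inl A :: x) = terms x := rfl
@[simp] theorem terms_inr {T : Type} (a : T) (x : SForm T) :
    terms (Sum.inr a :: x) = a :: terms x := by simp [terms]
@[simp] theorem skel_nil {T : Type} : skel ([] : SForm T) = [] := rfl
@[simp] theorem terms_nil {T : Type} : terms ([] : SForm T) = [] := rfl

theorem ntCount_eq {T : Type} (x : SForm T) : ntCount x = (skel x).length := by
  induction x with
  | nil => rfl
  | cons s x ih =>
    unfold ntCount at *
    cases s with
    | inl A => rw [List.filter_cons_of_pos rfl]; simp [ih]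
    | inr a => rw [List.filter_cons_of_neg (by simp)]; simp [ih]

theorem fill_append {T : Type} (x y : SForm T) (vs ws : List (List T))
    (h : vs.length = (skel x).length) : fill (x ++ y) (vs ++ ws) = fill x vs ++ fill y ws := by
  induction x generalizing vs with
  | nil =>
    have : vs = [] := by simpa using h
    subst this; simp [fill]
  | cons s x ih =>
    cases s with
    | inr a => simp [fill, ih vs (by simpa using h)]
    | inl A =>
      cases vs with
      | nil => simp at h
      | cons v vs => simp [fill, ih vs (by simpa using h)]

theorem skel_split {T : Type} (x : SForm T) (a b : List ℕ) (h : skel x = a ++ b) :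
    ∃ u v, x = u ++ v ∧ skel u = a ∧ skel v = b := by
  induction x generalizing a with
  | nil =>
    simp at h
    exact ⟨[], [], by simp [h.1, h.2]⟩
  | cons s x ih =>
    cases s with
    | inr t =>
      obtain ⟨u, v, h1, h2, h3⟩ := ih a (by simpa using h)
      exact ⟨Sum.inr t :: u, v, by simp [h1], by simp [h2], h3⟩
    | inl A =>
      cases a with
      | nil => exact ⟨[], Sum.inl A :: x, rfl, rfl, by simpa using h⟩
      | cons A' a =>
        simp at h
        obtain ⟨u, v, h1, h2, h3⟩ := ih a h.2
        exact ⟨Sum.inl A :: u, v, by simp [h1], by simp [h2, h.1], h3⟩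

theorem skel_split_cons {T : Type} (x : SForm T) (a b : List ℕ) (A : ℕ)
    (h : skel x = a ++ A :: b) :
    ∃ u v, x = u ++ Sum.inl A :: v ∧ skel u = a ∧ skel v = b := by
  induction x generalizing a with
  | nil => simp at h
  | cons s x ih =>
    cases s with
    | inr t =>
      obtain ⟨u, v, h1, h2, h3⟩ := ih a (by simpa using h)
      exact ⟨Sum.inr t :: u, v, by simp [h1], by simp [h2], h3⟩
    | inl B =>
      cases a with
      | nil =>
        simp at h
        exact ⟨[], x, by simp [h.1], rfl, h.2⟩
      | cons A' a =>
        simp at h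
        obtain ⟨u, v, h1, h2, h3⟩ := ih a h.2
        exact ⟨Sum.inl B :: u, v, by simp [h1], by simp [h2, h.1], h3⟩

theorem rstep_replay {T : Type} {P : List (Rule T)} {x y : SForm T} (h : RStep P x y)
    (vs : List (List T)) (hv : vs.length = (skel y).length) :
    ∃ vs', vs'.length = (skel x).length ∧ fill x vs' = fill y vs ∧
      ∀ x', skel x' = skel x →
        ∃ y', RStep P x' y' ∧ skel y' = skel y ∧ fill x' vs' = fill y' vs := by
  obtain ⟨r, hr, u, v, rfl, rfl⟩ := h
  simp only [skel_append, List.length_append] at hv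
  obtain ⟨v1, w, rfl, h1⟩ : ∃ v1 w, vs = v1 ++ w ∧ v1.length = (skel u).length :=
    ⟨vs.take (skel u).length, vs.drop (skel u).length, by simp, by simp; omega⟩
  obtain ⟨v2, v3, rfl, h2⟩ : ∃ v2 v3, w = v2 ++ v3 ∧ v2.length = (skel r.2).length :=
    ⟨w.take (skel r.2).length, w.drop (skel r.2).length, by simp, by
      simp at hv ⊢; omega⟩
  have key : ∀ u' v' : SForm T, skel u' = skel u →
      fill (u' ++ Sum.inl r.1 :: v') (v1 ++ fill r.2 v2 :: v3) =
        fill (u' ++ r.2 ++ v') (v1 ++ (v2 ++ v3)) := by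
    intro u' v' hu
    rw [List.append_assoc, fill_append _ _ _ _ (by rw [hu, h1]),
      fill_append _ _ _ _ (by rw [hu, h1]), fill_append _ _ _ _ h2]
    simp [fill]
  refine ⟨v1 ++ fill r.2 v2 :: v3, ?_, key u v rfl, ?_⟩
  · simp [skel_append] at hv ⊢; omega
  · intro x' hx'
    rw [skel_append, skel_inl] at hx'
    obtain ⟨u', v', rfl, hu, hv'⟩ := skel_split_cons _ _ _ _ hx'
    exact ⟨u' ++ r.2 ++ v', ⟨r, hr, u', v', rfl, rfl⟩, by simp [skel_append, hu, hv'],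
      key u' v' hu⟩

theorem stepsN_replay {T : Type} {P : List (Rule T)} (k : ℕ) {x y : SForm T}
    (h : StepsN P k x y)
    (vs : List (List T)) (hv : vs.length = (skel y).length) :
    ∃ vs', vs'.length = (skel x).length ∧ fill x vs' = fill y vs ∧
      ∀ x', skel x' = skel x →
        ∃ y', StepsN P k x' y' ∧ skel y' = skel y ∧ fill x' vs' = fill y' vs := by
  induction k generalizing x with
  | zero =>
    have h' : x = y := h
    subst h'
    exact ⟨vs, hv, rfl, fun x' hx => ⟨x', rfl, hx, rfl⟩⟩
  | succ k ih =>
    obtain ⟨z, hz, hzy⟩ := h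
    obtain ⟨vz, h1, h2, h3⟩ := ih hzy
    obtain ⟨vx, g1, g2, g3⟩ := rstep_replay hz vz h1
    refine ⟨vx, g1, g2.trans h2, fun x' hx => ?_⟩
    obtain ⟨z', a1, a2, a3⟩ := g3 x' hx
    obtain ⟨y', b1, b2, b3⟩ := h3 z' a2
    exact ⟨y', ⟨z', a1, b1⟩, b2, a3.trans b3⟩

theorem rstep_skel {T : Type} {P : List (Rule T)} {x x' : SForm T} (h : skel x' = skel x)
    (hx : ∃ y, RStep P x y) : ∃ y, RStep P x' y := by
  obtain ⟨y, hy⟩ := hx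
  obtain ⟨_, _, _, h3⟩ := rstep_replay hy (List.replicate (skel y).length []) (by simp)
  obtain ⟨y', h, _⟩ := h3 x' h
  exact ⟨y', h⟩

theorem skel_map_inr {T : Type} (z : List T) : skel (z.map Sum.inr) = [] := by
  induction z with
  | nil => rfl
  | cons a z ih => simp [ih]

theorem terms_map_inr {T : Type} (z : List T) : terms (z.map Sum.inr) = z := by
  induction z with
  | nil => rfl
  | cons a z ih => simp [ih]

theorem fill_nil_of_skel {T : Type} (x : SForm T) (h : skel x = []) :
    x = (fill x []).map Sum.inr := by
  induction x with
  | nil => rfl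
  | cons s x ih =>
    cases s with
    | inl A => simp at h
    | inr a => simp [fill, ← ih (by simpa using h)]

theorem fill_map_inr {T : Type} (z : List T) : fill (z.map Sum.inr) [] = z := by
  induction z with
  | nil => rfl
  | cons a z ih => simp [fill, ih]

theorem replay {T : Type} (G : CDGS T) (m : ℕ) {x : SForm T} {z : List T}
    (h : Relation.ReflTransGen (G.ModeStep (Mode.conj Mode.t (Mode.eq m))) x (z.map Sum.inr)) :
    ∃ vs, vs.length = (skel x).length ∧ fill x vs = z ∧ ∀ x', skel x' = skel x →
      Relation.ReflTransGen (G.ModeStep (Mode.conj Mode.t (Mode.eq m))) x'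
        ((fill x' vs).map Sum.inr) := by
  induction h using Relation.ReflTransGen.head_induction_on with
  | refl =>
    refine ⟨[], by simp [skel_map_inr], fill_map_inr z, fun x' hx => ?_⟩
    rw [skel_map_inr] at hx
    rw [← fill_nil_of_skel x' hx]
  | head hxy _ ih =>
    obtain ⟨vy, h1, h2, h3⟩ := ih
    obtain ⟨i, k, hs, ht, hk⟩ := hxy
    obtain ⟨vx, g1, g2, g3⟩ := stepsN_replay k hs vy h1
    refine ⟨vx, g1, g2.trans h2, fun x' hx => ?_⟩
    obtain ⟨y', b1, b2, b3⟩ := g3 x' hx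
    rw [b3]
    refine Relation.ReflTransGen.head ⟨i, k, b1, ?_, hk⟩ (h3 y' b2)
    intro hh
    exact ht (rstep_skel b2.symm hh)

theorem count_fill (x : SForm ℕ) (vs : List (List ℕ)) (h : vs.length = (skel x).length) (a : ℕ) :
    (fill x vs).count a = (terms x).count a + vs.flatten.count a := by
  induction x generalizing vs with
  | nil =>
    have : vs = [] := by simpa using h
    subst this; simp [fill]
  | cons s x ih =>
    cases s with
    | inr b =>
      simp only [fill, terms_inr, List.count_cons, ih vs (by simpa using h)]; omega
    | inl A =>
      cases vs with
      | nil => simp at h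
      | cons v vs =>
        simp only [fill, terms_inl, List.flatten_cons, List.count_append,
          ih vs (by simpa using h)]; omega

theorem mem_terms_fill (x : SForm ℕ) (vs : List (List ℕ)) (a : ℕ) (h : a ∈ terms x) :
    a ∈ fill x vs := by
  induction x generalizing vs with
  | nil => simp at h
  | cons s x ih =>
    cases s with
    | inr b =>
      simp only [terms_inr, List.mem_cons, fill] at *
      rcases h with h | h
      · exact Or.inl h
      · exact Or.inr (ih _ h)
    | inl A =>
      cases vs <;> simp only [terms_inl, fill, List.mem_append] at *
      · exact ih _ h
      · exact Or.inr (ih _ h)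

theorem sublist_fill (x : SForm ℕ) (vs : List (List ℕ)) (h : vs.length = (skel x).length)
    (v : List ℕ) (hv : v ∈ vs) : v.Sublist (fill x vs) := by
  induction x generalizing vs with
  | nil =>
    have : vs = [] := by simpa using h
    subst this; simp at hv
  | cons s x ih =>
    cases s with
    | inr b => exact (ih vs (by simpa using h) hv).cons _
    | inl A =>
      cases vs with
      | nil => simp at h
      | cons w vs =>
        simp only [fill]
        rcases List.mem_cons.1 hv with rfl | hv
        · exact List.sublist_append_left _ _
        · exact (ih vs (by simpa using h) hv).trans (List.sublist_append_right _ _)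

theorem head_eq (v : List ℕ) (a : ℕ) (hv : v.Pairwise (· ≤ ·)) (ha : a ∈ v)
    (hmin : ∀ b ∈ v, a ≤ b) : v.head? = some a := by
  cases v with
  | nil => simp at ha
  | cons b v =>
    simp only [List.head?_cons, Option.some.injEq]
    have h1 := hmin b (by simp)
    rcases List.mem_cons.1 ha with h | h
    · exact h.symm
    · have := (List.pairwise_cons.1 hv).1 a h
      omega

theorem last_eq (v : List ℕ) (a : ℕ) (hv : v.Pairwise (· ≤ ·)) (ha : a ∈ v)
    (hmax : ∀ b ∈ v, b ≤ a) : v.getLast? = some a := by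
  rcases List.eq_nil_or_concat v with rfl | ⟨w, b, rfl⟩
  · simp at ha
  · simp only [List.concat_eq_append] at *
    rw [List.getLast?_concat]
    have h1 := hmax b (by simp)
    rcases List.mem_append.1 ha with h | h
    · have := (List.pairwise_append.1 hv).2.2 a h b (by simp)
      congr 1; omega
    · simp at h; simp [h]

theorem mixed (x : SForm ℕ) (vs : List (List ℕ)) (h : vs.length = (skel x).length)
    (hz : (fill x vs).Pairwise (· ≤ ·)) (a : ℕ) (h1 : a ∈ terms x) (h2 : a ∈ vs.flatten) :
    ∃ v ∈ vs, v.head? = some a ∨ v.getLast? = some a := by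
  induction x generalizing vs with
  | nil => simp at h1
  | cons s x ih =>
    cases s with
    | inr b =>
      simp only [fill, List.pairwise_cons] at hz
      simp only [skel_inr, terms_inr, List.mem_cons] at h h1
      rcases h1 with rfl | h1
      · obtain ⟨v, hv, hav⟩ := List.mem_flatten.1 h2
        have hs := sublist_fill x vs h v hv
        exact ⟨v, hv, Or.inl (head_eq v a (hz.2.sublist hs) hav
          fun b hb => hz.1 b (hs.subset hb))⟩
      · exact ih vs h hz.2 h1 h2
    | inl A =>
      cases vs with
      | nil => simp at h
      | cons w vs =>
        simp only [fill, List.pairwise_append] at hz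
        simp only [terms_inl] at h1
        rw [List.flatten_cons, List.mem_append] at h2
        rcases h2 with h2 | h2
        · exact ⟨w, by simp, Or.inr (last_eq w a hz.1 h2
            fun b hb => hz.2.2 b hb a (mem_terms_fill x vs a h1))⟩
        · obtain ⟨v, hv, hh⟩ := ih vs (by simpa using h) hz.2.1 h1 h2
          exact ⟨v, by simp [hv], hh⟩

theorem mixed_card (x : SForm ℕ) (vs : List (List ℕ)) (h : vs.length = (skel x).length)
    (hz : (fill x vs).Pairwise (· ≤ ·)) (K : ℕ)
    (hK : ∀ a < K, a ∈ terms x ∧ a ∈ vs.flatten) : K ≤ 2 * (skel x).length := by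
  have hsub : Finset.range K ⊆
      (vs.filterMap List.head? ++ vs.filterMap List.getLast?).toFinset := by
    intro a ha
    obtain ⟨h1, h2⟩ := hK a (Finset.mem_range.1 ha)
    obtain ⟨v, hv, hh⟩ := mixed x vs h hz a h1 h2
    simp only [List.mem_toFinset, List.mem_append, List.mem_filterMap]
    rcases hh with hh | hh
    · exact Or.inl ⟨v, hv, hh⟩
    · exact Or.inr ⟨v, hv, hh⟩
  have h1 := Finset.card_le_card hsub
  have h2 := List.toFinset_card_le (vs.filterMap List.head? ++ vs.filterMap List.getLast?)
  have h3 := List.length_filterMap_le List.head? vs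
  have h4 := List.length_filterMap_le List.getLast? vs
  rw [List.length_append] at h2
  rw [Finset.card_range] at h1
  omega

theorem crossing {α : Type} {R : α → α → Prop} (f : α → ℕ) (c : ℕ) {a b : α}
    (h : Relation.ReflTransGen R a b) (ha : f a < c) (hb : c ≤ f b) :
    ∃ x y, Relation.ReflTransGen R a x ∧ f x < c ∧ R x y ∧ c ≤ f y ∧
      Relation.ReflTransGen R y b := by
  induction h with
  | refl => omega
  | @tail b d hab hbd ih =>
    by_cases hc : c ≤ f b
    · obtain ⟨x, y, h1, h2, h3, h4, h5⟩ := ih hc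
      exact ⟨x, y, h1, h2, h3, h4, h5.tail hbd⟩
    · exact ⟨b, d, hab, by omega, hbd, hb, Relation.ReflTransGen.refl⟩

theorem stepsNB_stepsN {T : Type} {P : List (Rule T)} {b : ℕ} (k : ℕ) {x y : SForm T}
    (h : StepsNB P b k x y) : StepsN P k x y := by
  induction k generalizing x with
  | zero => exact h
  | succ k ih =>
    obtain ⟨z, h1, _, h2⟩ := h
    exact ⟨z, h1, ih h2⟩

theorem stepsNB_count {T : Type} {P : List (Rule T)} {b : ℕ} (k : ℕ) {x y : SForm T}
    (hx : ntCount x ≤ b) (h : StepsNB P b k x y) : ntCount y ≤ b := by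
  induction k generalizing x with
  | zero => exact (show x = y from h) ▸ hx
  | succ k ih =>
    obtain ⟨z, _, h1, h2⟩ := h
    exact ih h1 h2

theorem stepsN_inv {T : Type} {P : List (Rule T)} (I : SForm T → Prop)
    (hI : ∀ x y, I x → RStep P x y → I y) (k : ℕ) {x y : SForm T}
    (hx : I x) (h : StepsN P k x y) : I y := by
  induction k generalizing x with
  | zero => exact (show x = y from h) ▸ hx
  | succ k ih =>
    obtain ⟨z, h1, h2⟩ := h
    exact ih (hI _ _ hx h1) h2

theorem stepsN_terms {P : List (Rule ℕ)} (C : ℕ) (hC : ∀ r ∈ P, r.2.length ≤ C) (a : ℕ)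
    (k : ℕ) {x y : SForm ℕ} (h : StepsN P k x y) :
    (terms y).count a ≤ (terms x).count a + k * C := by
  induction k generalizing x with
  | zero => rw [show x = y from h]; omega
  | succ k ih =>
    obtain ⟨z, ⟨r, hr, u, v, rfl, rfl⟩, h2⟩ := h
    have := ih h2
    have h3 : (terms r.2).count a ≤ C :=
      (List.count_le_length).trans ((List.length_filterMap_le _ _).trans (hC r hr))
    simp only [terms_append, List.count_append, terms_inl] at *
    rw [Nat.succ_mul]
    omega

theorem finite_lists (B m : ℕ) : {l : List ℕ | l.length ≤ m ∧ ∀ a ∈ l, a < B}.Finite := by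
  refine ((List.finite_length_le (Fin B) m).image (List.map Fin.val)).subset ?_
  rintro l ⟨h1, h2⟩
  refine ⟨l.pmap (fun a h => (⟨a, h⟩ : Fin B)) h2, by simpa using h1, ?_⟩
  simp [List.map_pmap]

theorem exists_bound {T : Type} (G : CDGS T) (F : Rule T → ℕ) :
    ∃ C, ∀ i, ∀ r ∈ G.comp i, F r ≤ C := by
  refine ⟨∑ i, ((G.comp i).map F).sum, fun i r hr => ?_⟩
  have h1 : F r ≤ ((G.comp i).map F).sum := List.single_le_sum (by simp) _ (List.mem_map_of_mem hr)
  exact h1.trans (Finset.single_le_sum (f := fun i => ((G.comp i).map F).sum)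
    (fun _ _ => Nat.zero_le _) (Finset.mem_univ i))

theorem lower (lf : Bool) (n m : ℕ) (hm : 1 ≤ m) (L : Set (List ℕ))
    (hs : ∀ w ∈ L, w.Pairwise (· ≤ ·))
    (hc : ∀ w ∈ L, ∀ i j, i < 4 * m → j < 4 * m → w.count i ≤ w.count j + 1)
    (hu : ∀ N, ∃ w ∈ L, N ≤ w.count 0) :
    L ∉ CDFamInd ℕ lf n (Mode.conj Mode.t (Mode.eq m)) m := by
  rintro ⟨G, -, -, hE, hB⟩
  have hL : ∀ w, w ≠ [] → (w ∈ L ↔ w ∈ G.lang (Mode.conj Mode.t (Mode.eq m))) := by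
    intro w hw
    have := Set.ext_iff.1 hE w
    simp [hw] at this
    exact this.symm
  have hc' : ∀ w ∈ G.lang (Mode.conj Mode.t (Mode.eq m)), ∀ i j, i < 4 * m → j < 4 * m →
      w.count i ≤ w.count j + 1 := by
    intro w hw
    by_cases h0 : w = []
    · subst h0; simp
    · exact hc w ((hL w h0).2 hw)
  obtain ⟨C, hC⟩ := exists_bound G (fun r => r.2.length)
  obtain ⟨B0, hB0⟩ := exists_bound G (fun r => (skel r.2).sum)
  set B := max B0 G.start + 1 with hBdef
  -- selection of cut points
  have sel : ∀ N : ℕ, ∃ w ∈ L, N + 2 ≤ w.count 0 ∧ ∃ y : SForm ℕ,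
      Relation.TransGen (G.ModeStep (Mode.conj Mode.t (Mode.eq m))) [Sum.inl G.start] y ∧
      Relation.ReflTransGen (G.ModeStep (Mode.conj Mode.t (Mode.eq m))) y (w.map Sum.inr) ∧
      (skel y).length ≤ m ∧ (∀ a ∈ skel y, a < B) ∧
      w.count 0 ≤ 2 * (terms y).count 0 + 1 ∧ 2 * (terms y).count 0 ≤ w.count 0 + 2 * (m * C) := by
    intro N
    obtain ⟨w, hw, hN⟩ := hu (N + 2)
    have hw0 : w ≠ [] := by rintro rfl; simp at hN
    obtain ⟨hst, hpath⟩ := hB ((hL w hw0).1 hw)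
    have hinv : ∀ y, Relation.ReflTransGen (G.ModeStepB (Mode.conj Mode.t (Mode.eq m)) m)
        [Sum.inl G.start] y → ntCount y ≤ m ∧ ∀ a ∈ skel y, a < B := by
      intro y hy
      induction hy with
      | refl => exact ⟨hst, by simp [hBdef]⟩
      | tail _ hyz ih =>
        obtain ⟨i, k, hk, -⟩ := hyz
        refine ⟨stepsNB_count k ih.1 hk, stepsN_inv (fun x => ∀ a ∈ skel x, a < B) ?_ k ih.2
          (stepsNB_stepsN k hk)⟩
        rintro _ _ hx ⟨r, hr, u, v, rfl, rfl⟩ a ha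
        simp only [skel_append, skel_inl, List.mem_append, List.mem_cons] at hx ha
        rcases ha with (ha | ha) | ha
        · exact hx a (Or.inl ha)
        · have := List.single_le_sum (l := skel r.2) (by simp) a ha
          have := hB0 i r hr
          have : B0 ≤ max B0 G.start := le_max_left _ _
          omega
        · exact hx a (Or.inr (Or.inr ha))
    have hmono : ∀ x y, G.ModeStepB (Mode.conj Mode.t (Mode.eq m)) m x y →
        G.ModeStep (Mode.conj Mode.t (Mode.eq m)) x y := by
      rintro x y ⟨i, k, h1, h2⟩
      exact ⟨i, k, stepsNB_stepsN k h1, h2⟩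
    obtain ⟨x, y, h1, h2, h3, h4, h5⟩ := crossing (fun x => (terms x).count 0)
      (w.count 0 / 2) hpath.to_reflTransGen (by simp; omega)
      (by simp only [terms_map_inr]; omega)
    obtain ⟨g1, g2⟩ := hinv y (h1.tail h3)
    refine ⟨w, hw, hN, y, Relation.TransGen.tail' (Relation.ReflTransGen.mono hmono _ _ h1) (hmono _ _ h3),
      Relation.ReflTransGen.mono hmono _ _ h5, by rwa [← ntCount_eq], g2, ?_, ?_⟩
    · omega
    · obtain ⟨i, k, hk, -, hkm⟩ := h3
      have hkm' : k = m := hkm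
      subst hkm'
      have := stepsN_terms C (hC i) 0 k (stepsNB_stepsN k hk)
      omega
  choose w hw hwN y hy1 hy2 hy3 hy4 hy5 hy6 using sel
  have hfin := finite_lists B m
  obtain ⟨s, hsinf⟩ : ∃ s, (Set.Infinite {N | skel (y N) = s}) := by
    by_contra hcon
    push Not at hcon
    have : (Set.univ : Set ℕ).Finite := by
      refine (hfin.biUnion (t := fun s => {N | skel (y N) = s}) (fun s _ => hcon s)).subset ?_
      intro N _
      simp only [Set.mem_iUnion]
      exact ⟨skel (y N), ⟨hy3 N, hy4 N⟩, rfl⟩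
    exact Set.infinite_univ this
  obtain ⟨N0, hN0⟩ := hsinf.nonempty
  obtain ⟨vs0, e1, e2, e3⟩ := replay G m (hy2 N0)
  obtain ⟨N, hN, hbig⟩ := hsinf.exists_gt (2 * (m * C) + 2 * vs0.flatten.length + 20)
  obtain ⟨vs, f1, f2, f3⟩ := replay G m (hy2 N)
  have hsk : skel (y N) = skel (y N0) := by
    simp only [Set.mem_ofPred_eq] at hN hN0
    rw [hN, hN0]
  have hcross : fill (y N) vs0 ∈ G.lang (Mode.conj Mode.t (Mode.eq m)) :=
    (hy1 N).trans_left (e3 (y N) hsk)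
  have hcc := hc' _ hcross
  have := mixed_card (y N) vs f1 (by rw [f2]; exact hs _ (hw N)) (4 * m) (by
    intro a ha
    have c1 := hcc a 0 ha (by omega)
    have c2 := hcc 0 a (by omega) ha
    rw [count_fill _ _ (by rw [e1, hsk]), count_fill _ _ (by rw [e1, hsk])] at c1 c2
    have d1 := hc _ (hw N) 0 a (by omega) ha
    have d2 := count_fill (y N) vs f1 a
    rw [f2] at d2
    have l0 : vs0.flatten.count 0 ≤ vs0.flatten.length := List.count_le_length
    have la : vs0.flatten.count a ≤ vs0.flatten.length := List.count_le_length
    have k1 := hwN N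
    have k2 := hy5 N
    have k3 := hy6 N
    constructor
    · rw [← List.count_pos_iff]; omega
    · rw [← List.count_pos_iff]; omega)
  have := hy3 N
  omega

/-! ### Part II: construction -/

def nxt (q : ℕ) : List ℕ :=
  if q < 3 then [(q + 2) % 3, 3 + (q + 1) % 3] else if q < 6 then [6 + (q + 1) % 3] else [9]

def sy (t q : ℕ) : SForm ℕ := if q < 9 then [Sum.inl (1 + 9 * t + q)] else []

def blk (t : ℕ) (p : ℕ × ℕ) : SForm ℕ :=
  List.replicate p.1 (Sum.inr (2 * t)) ++ (sy t p.2 ++ List.replicate p.1 (Sum.inr (2 * t + 1)))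

def mkRule (t q q' : ℕ) : Rule ℕ :=
  (1 + 9 * t + q, Sum.inr (2 * t) :: (sy t q' ++ [Sum.inr (2 * t + 1)]))

def PP (m i : ℕ) : List (Rule ℕ) :=
  (List.range (2 * m)).flatMap fun t =>
    ((List.range 9).filter (fun q => q % 3 = i)).flatMap fun q => (nxt q).map fun q' => mkRule t q q'

theorem mem_PP (m i : ℕ) (r : Rule ℕ) : r ∈ PP m i ↔
    ∃ t < 2 * m, ∃ q, q < 9 ∧ q % 3 = i ∧ ∃ q' ∈ nxt q, r = mkRule t q q' := by
  simp only [PP, List.mem_flatMap, List.mem_range, List.mem_filter, List.mem_map,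
    decide_eq_true_eq]
  constructor
  · rintro ⟨t, ht, q, ⟨h1, h2⟩, q', h3, rfl⟩
    exact ⟨t, ht, q, h1, h2, q', h3, rfl⟩
  · rintro ⟨t, ht, q, h1, h2, q', h3, rfl⟩
    exact ⟨t, ht, q, ⟨h1, h2⟩, q', h3, rfl⟩

def sl (m i A : ℕ) : Bool := decide (1 ≤ A ∧ A ≤ 18 * m ∧ (A - 1) % 3 = i)

theorem nxt_ne_nil (q : ℕ) : nxt q ≠ [] := by
  unfold nxt; split_ifs <;> simp

theorem nxt_mod {q s : ℕ} (hq : q < 9) (h : s ∈ nxt q) (hs : s < 9) : s % 3 ≠ q % 3 := by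
  unfold nxt at h
  split_ifs at h <;> simp at h <;> omega

theorem sl_iff (m i A : ℕ) : sl m i A = true ↔ ∃ r ∈ PP m i, r.1 = A := by
  simp only [sl, decide_eq_true_eq]
  constructor
  · rintro ⟨h1, h2, h3⟩
    obtain ⟨q', hq'⟩ := List.exists_mem_of_ne_nil _ (nxt_ne_nil ((A - 1) % 9))
    refine ⟨mkRule ((A - 1) / 9) ((A - 1) % 9) q', (mem_PP _ _ _).2
      ⟨(A - 1) / 9, by omega, (A - 1) % 9, by omega, by omega, q', hq', rfl⟩, ?_⟩
    simp only [mkRule]; omega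
  · rintro ⟨r, hr, rfl⟩
    obtain ⟨t, ht, q, h1, h2, q', h3, rfl⟩ := (mem_PP _ _ _).1 hr
    simp only [mkRule]
    omega

def cnt (m i : ℕ) (x : SForm ℕ) : ℕ := (skel x).countP (sl m i)

theorem cnt_append (m i : ℕ) (x y : SForm ℕ) : cnt m i (x ++ y) = cnt m i x + cnt m i y := by
  simp [cnt, skel_append]

theorem cnt_inl (m i A : ℕ) (y : SForm ℕ) :
    cnt m i (Sum.inl A :: y) = cnt m i y + if sl m i A then 1 else 0 := by
  simp [cnt, List.countP_cons]

theorem cnt_inr (m i a : ℕ) (y : SForm ℕ) : cnt m i (Sum.inr a :: y) = cnt m i y := rfl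

theorem cnt_nil (m i : ℕ) : cnt m i [] = 0 := rfl

theorem cnt_replicate (m i k a : ℕ) : cnt m i (List.replicate k (Sum.inr a)) = 0 := by
  induction k with
  | zero => rfl
  | succ k ih => rw [List.replicate_succ, cnt_inr, ih]

theorem cnt_sy (m i t q : ℕ) (ht : t < 2 * m) :
    cnt m i (sy t q) = if q < 9 ∧ q % 3 = i then 1 else 0 := by
  unfold sy
  by_cases h : q < 9
  · simp only [h, if_true, cnt_inl, cnt_nil, true_and, Nat.zero_add]
    have : sl m i (1 + 9 * t + q) = true ↔ q % 3 = i := by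
      simp only [sl, decide_eq_true_eq]; omega
    simp only [this]
  · simp [h, cnt_nil]

theorem cnt_blk (m i t : ℕ) (p : ℕ × ℕ) (ht : t < 2 * m) :
    cnt m i (blk t p) = if p.2 < 9 ∧ p.2 % 3 = i then 1 else 0 := by
  simp [blk, cnt_append, cnt_replicate, cnt_sy m i t p.2 ht]

theorem cnt_rule {m i : ℕ} {r : Rule ℕ} (hr : r ∈ PP m i) : cnt m i r.2 = 0 := by
  obtain ⟨t, ht, q, h1, h2, q', h3, rfl⟩ := (mem_PP _ _ _).1 hr
  simp only [mkRule, cnt_inr, cnt_append, cnt_nil, cnt_sy m i t q' ht]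
  have := fun h => nxt_mod h1 h3 h
  split_ifs with h
  · exact absurd (h.2.trans h2.symm) (this h.1)
  · rfl

inductive Par (m i : ℕ) : SForm ℕ → SForm ℕ → Prop
  | nil : Par m i [] []
  | inr (a : ℕ) {x y : SForm ℕ} : Par m i x y → Par m i (Sum.inr a :: x) (Sum.inr a :: y)
  | skip (A : ℕ) {x y : SForm ℕ} : sl m i A = false → Par m i x y →
      Par m i (Sum.inl A :: x) (Sum.inl A :: y)
  | act (r : Rule ℕ) {x y : SForm ℕ} : r ∈ PP m i → Par m i x y →
      Par m i (Sum.inl r.1 :: x) (r.2 ++ y)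

theorem par_append {m i : ℕ} {x y x' y' : SForm ℕ} (h : Par m i x y) (h' : Par m i x' y') :
    Par m i (x ++ x') (y ++ y') := by
  induction h with
  | nil => exact h'
  | inr a _ ih => exact Par.inr a ih
  | skip A hA _ ih => exact Par.skip A hA ih
  | act r hr _ ih =>
    rw [List.append_assoc]
    exact Par.act r hr ih

theorem par_split {m i : ℕ} (x x' : SForm ℕ) {y : SForm ℕ} (h : Par m i (x ++ x') y) :
    ∃ y1 y2, y = y1 ++ y2 ∧ Par m i x y1 ∧ Par m i x' y2 := by
  induction x generalizing y with
  | nil => exact ⟨[], y, rfl, Par.nil, h⟩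
  | cons s x ih =>
    rw [List.cons_append] at h
    cases h with
    | inr a h =>
      obtain ⟨y1, y2, rfl, h1, h2⟩ := ih h
      exact ⟨_ :: y1, y2, rfl, Par.inr a h1, h2⟩
    | skip A hA h =>
      obtain ⟨y1, y2, rfl, h1, h2⟩ := ih h
      exact ⟨_ :: y1, y2, rfl, Par.skip A hA h1, h2⟩
    | act r hr h =>
      obtain ⟨y1, y2, rfl, h1, h2⟩ := ih h
      exact ⟨r.2 ++ y1, y2, by simp, Par.act r hr h1, h2⟩

theorem par_refl {m i : ℕ} (x : SForm ℕ) (h : cnt m i x = 0) : Par m i x x := by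
  induction x with
  | nil => exact Par.nil
  | cons s x ih =>
    cases s with
    | inr a => exact Par.inr a (ih h)
    | inl A =>
      rw [cnt_inl] at h
      refine Par.skip A ?_ (ih (by omega))
      by_contra hc
      simp [hc] at h

theorem par_cnt_zero {m i : ℕ} {x y : SForm ℕ} (hp : Par m i x y) (h : cnt m i x = 0) : y = x := by
  induction hp with
  | nil => rfl
  | inr a _ ih => rw [ih h]
  | skip A hA _ ih => rw [cnt_inl] at h; rw [ih (by omega)]
  | act r hr _ ih =>
    rw [cnt_inl, if_pos ((sl_iff _ _ _).2 ⟨r, hr, rfl⟩)] at h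
    omega

theorem par_cnt {m i : ℕ} {x y : SForm ℕ} (hp : Par m i x y) : cnt m i y = 0 := by
  induction hp with
  | nil => rfl
  | inr a _ ih => exact ih
  | skip A hA _ ih => simp [cnt_inl, ih, hA]
  | act r hr _ ih => rw [cnt_append, cnt_rule hr, ih]

theorem par_cnt_mono {m i j : ℕ} (hij : i ≠ j) {x y : SForm ℕ} (hp : Par m i x y) :
    cnt m j x ≤ cnt m j y := by
  induction hp with
  | nil => exact le_rfl
  | inr a _ ih => exact ih
  | skip A hA _ ih => simp only [cnt_inl]; omega
  | act r hr _ ih =>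
    have h1 : sl m i r.1 = true := (sl_iff _ _ _).2 ⟨r, hr, rfl⟩
    have h2 : ¬ sl m j r.1 = true := by
      simp only [sl, decide_eq_true_eq] at *; omega
    rw [cnt_inl, if_neg h2, cnt_append]; omega

theorem zero_rule {m i : ℕ} {r : Rule ℕ} (hr : r ∈ PP m i) : r.1 ≠ 0 ∧ 0 ∉ skel r.2 := by
  obtain ⟨t, ht, q, h1, h2, q', h3, rfl⟩ := (mem_PP _ _ _).1 hr
  simp only [mkRule, skel_inr, skel_append, sy]
  constructor
  · omega
  · split_ifs <;> simp
    omega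

theorem par_zero {m i : ℕ} {x y : SForm ℕ} (hp : Par m i x y) (h : 0 ∉ skel x) : 0 ∉ skel y := by
  induction hp with
  | nil => exact h
  | inr a _ ih => exact ih h
  | skip A hA _ ih => simp only [skel_inl, List.mem_cons, not_or] at *; exact ⟨h.1, ih h.2⟩
  | act r hr _ ih =>
    simp only [skel_inl, skel_append, List.mem_cons, List.mem_append, not_or] at *
    exact ⟨(zero_rule hr).2, ih h.2⟩

theorem par_of_steps {m i : ℕ} (k : ℕ) {x y : SForm ℕ} (h : StepsN (PP m i) k x y)
    (hy : cnt m i y = 0) : cnt m i x = k ∧ Par m i x y := by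
  induction k generalizing x with
  | zero =>
    have h' : x = y := h
    subst h'
    exact ⟨hy, par_refl _ hy⟩
  | succ k ih =>
    obtain ⟨z, ⟨r, hr, u, v, rfl, rfl⟩, h2⟩ := h
    obtain ⟨h3, h4⟩ := ih h2
    have hr0 := cnt_rule hr
    constructor
    · simp only [cnt_append, cnt_inl, if_pos ((sl_iff m i r.1).2 ⟨r, hr, rfl⟩)] at *
      omega
    · obtain ⟨y1, y2, rfl, p1, p2⟩ := par_split _ _ h4
      obtain ⟨y3, y4, rfl, p3, p4⟩ := par_split _ _ p1
      rw [par_cnt_zero p4 hr0, List.append_assoc]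
      exact par_append p3 (Par.act r hr p2)

theorem steps_prefix {P : List (Rule ℕ)} (k : ℕ) (u : SForm ℕ) {x y : SForm ℕ}
    (h : StepsN P k x y) : StepsN P k (u ++ x) (u ++ y) := by
  induction k generalizing x with
  | zero => rw [show x = y from h]; rfl
  | succ k ih =>
    obtain ⟨z, ⟨r, hr, a, b, rfl, rfl⟩, h2⟩ := h
    exact ⟨_, ⟨r, hr, u ++ a, b, by simp, rfl⟩, by simpa using ih h2⟩

theorem steps_of_par {m i : ℕ} {x y : SForm ℕ} (h : Par m i x y) :
    StepsN (PP m i) (cnt m i x) x y := by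
  induction h with
  | nil => rfl
  | inr a _ ih => exact steps_prefix _ [Sum.inr a] ih
  | skip A hA _ ih =>
    rw [cnt_inl, hA]
    exact steps_prefix _ [Sum.inl A] ih
  | act r hr _ ih =>
    rw [cnt_inl, if_pos ((sl_iff _ _ _).2 ⟨r, hr, rfl⟩)]
    exact ⟨_, ⟨r, hr, [], _, rfl, rfl⟩, steps_prefix _ r.2 ih⟩

def frm (σ : ℕ → ℕ × ℕ) (l : List ℕ) : SForm ℕ := l.flatMap fun t => blk t (σ t)

def U (m : ℕ) (g : ℕ → Bool) (a b : ℕ × ℕ) : SForm ℕ :=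
  frm (fun t => if g t then a else b) (List.range (2 * m))

def g0 (m t : ℕ) : Bool := decide (t < m)

def SR (m : ℕ) (i : ℕ) : List (Rule ℕ) :=
  if i = 1 then [(0, [Sum.inl 0]), (0, U m (g0 m) (0, 2) (0, 0))] else []

def GG (m : ℕ) : CDGS ℕ := ⟨3, 0, fun i => SR m i ++ PP m i⟩

theorem rstep_SR {m i : ℕ} {x y : SForm ℕ} (h0 : 0 ∉ skel x) (h : RStep (SR m i ++ PP m i) x y) :
    RStep (PP m i) x y ∧ 0 ∉ skel y := by
  obtain ⟨r, hr, u, v, rfl, rfl⟩ := h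
  simp only [skel_append, skel_inl, List.mem_append, List.mem_cons, not_or] at h0
  have hr' : r ∈ PP m i := by
    rcases List.mem_append.1 hr with h | h
    · unfold SR at h
      exfalso
      split_ifs at h
      · simp at h
        rcases h with rfl | rfl <;> simp at h0
      · simp at h
    · exact h
  refine ⟨⟨r, hr', u, v, rfl, rfl⟩, ?_⟩
  simp only [skel_append, List.mem_append, not_or]
  exact ⟨⟨h0.1, (zero_rule hr').2⟩, h0.2.2⟩

theorem rstep_mono {P Q : List (Rule ℕ)} (h : ∀ r ∈ P, r ∈ Q) {x y : SForm ℕ}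
    (hs : RStep P x y) : RStep Q x y := by
  obtain ⟨r, hr, h'⟩ := hs
  exact ⟨r, h r hr, h'⟩

theorem stepsN_mono {P Q : List (Rule ℕ)} (h : ∀ r ∈ P, r ∈ Q) (k : ℕ) {x y : SForm ℕ}
    (hs : StepsN P k x y) : StepsN Q k x y := by
  induction k generalizing x with
  | zero => exact hs
  | succ k ih =>
    obtain ⟨z, h1, h2⟩ := hs
    exact ⟨z, rstep_mono h h1, ih h2⟩

theorem stepsN_SR {m i : ℕ} (k : ℕ) {x y : SForm ℕ} (h0 : 0 ∉ skel x)
    (h : StepsN (SR m i ++ PP m i) k x y) : StepsN (PP m i) k x y := by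
  induction k generalizing x with
  | zero => exact h
  | succ k ih =>
    obtain ⟨z, h1, h2⟩ := h
    obtain ⟨h3, h4⟩ := rstep_SR h0 h1
    exact ⟨z, h3, ih h4 h2⟩

theorem rstep_iff_cnt (m i : ℕ) (y : SForm ℕ) : (∃ z, RStep (PP m i) y z) ↔ cnt m i y ≠ 0 := by
  constructor
  · rintro ⟨z, r, hr, u, v, rfl, rfl⟩
    simp only [cnt_append, cnt_inl, if_pos ((sl_iff m i r.1).2 ⟨r, hr, rfl⟩)]
    omega
  · intro h
    have h1 : 0 < (skel y).countP (sl m i) := Nat.pos_of_ne_zero h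
    obtain ⟨A, hA, hs⟩ := List.countP_pos_iff.1 h1
    obtain ⟨r, hr, rfl⟩ := (sl_iff _ _ _).1 hs
    obtain ⟨a, b, hab⟩ := List.append_of_mem hA
    obtain ⟨u, v, rfl, -, -⟩ := skel_split_cons _ _ _ _ hab
    exact ⟨_, r, hr, u, v, rfl, rfl⟩

theorem mode_iff (m : ℕ) {x y : SForm ℕ} (h0 : 0 ∉ skel x) :
    (GG m).ModeStep (Mode.conj Mode.t (Mode.eq m)) x y ↔
      ∃ i < 3, cnt m i x = m ∧ Par m i x y := by
  constructor
  · rintro ⟨i, k, h1, h2, h3⟩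
    have h3' : k = m := h3
    subst h3'
    have h1' : StepsN (PP k i) k x y := stepsN_SR k h0 h1
    refine ⟨i, i.2, par_of_steps k h1' ?_⟩
    by_contra hc
    obtain ⟨z, hz⟩ := (rstep_iff_cnt _ _ _).2 hc
    exact h2 ⟨z, rstep_mono (fun r hr => List.mem_append_right _ hr) hz⟩
  · rintro ⟨i, hi, h1, h2⟩
    have h3 := steps_of_par h2
    rw [h1] at h3
    refine ⟨⟨i, hi⟩, m, stepsN_mono (fun r hr => List.mem_append_right _ hr) m h3, ?_, rfl⟩
    rintro ⟨z, hz⟩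
    exact (rstep_iff_cnt m i y).1 ⟨z, (rstep_SR (par_zero h2 h0) hz).1⟩ (par_cnt h2)

def tr (i : ℕ) (p p' : ℕ × ℕ) : Prop :=
  if p.2 < 9 ∧ p.2 % 3 = i then p'.1 = p.1 + 1 ∧ p'.2 ∈ nxt p.2 else p' = p

theorem blk_succ (t c q q' : ℕ) : blk t (c + 1, q') =
    List.replicate c (Sum.inr (2 * t)) ++
      ((mkRule t q q').2 ++ List.replicate c (Sum.inr (2 * t + 1))) := by
  simp only [blk, mkRule]
  rw [List.replicate_succ' , List.replicate_succ]
  simp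

theorem par_sy {m i t q : ℕ} (hq : q < 9) {y : SForm ℕ} (ht : t < 2 * m) (hi : q % 3 = i)
    (h : Par m i (sy t q) y) : ∃ q' ∈ nxt q, y = (mkRule t q q').2 := by
  rw [sy, if_pos hq] at h
  generalize hA : 1 + 9 * t + q = A at h
  cases h with
  | skip A hA' h =>
    exfalso
    have : sl m i A = true := by
      simp only [sl, decide_eq_true_eq]; omega
    rw [this] at hA'
    cases hA'
  | act r hr h =>
    cases h
    obtain ⟨t', ht', q1, h1, h2, q', h3, rfl⟩ := (mem_PP _ _ _).1 hr
    simp only [mkRule] at hA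
    have : t' = t := by omega
    subst this
    have : q1 = q := by omega
    subst this
    exact ⟨q', h3, by simp⟩

theorem par_blk {m i t : ℕ} (ht : t < 2 * m) (p : ℕ × ℕ) (y : SForm ℕ) :
    Par m i (blk t p) y ↔ ∃ p', tr i p p' ∧ y = blk t p' := by
  obtain ⟨c, q⟩ := p
  by_cases h : q < 9 ∧ q % 3 = i
  · simp only [tr, h, and_self, if_true]
    constructor
    · intro hp
      simp only [blk] at hp
      obtain ⟨y1, y2, rfl, p1, p2⟩ := par_split _ _ hp
      obtain ⟨y3, y4, rfl, p3, p4⟩ := par_split _ _ p2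
      obtain ⟨q', h1, rfl⟩ := par_sy h.1 ht h.2 p3
      rw [par_cnt_zero p1 (cnt_replicate _ _ _ _), par_cnt_zero p4 (cnt_replicate _ _ _ _)]
      exact ⟨(c + 1, q'), ⟨rfl, h1⟩, (blk_succ t c q q').symm⟩
    · rintro ⟨⟨c', q'⟩, ⟨h1, h2⟩, rfl⟩
      simp only at h1 h2
      subst h1
      rw [blk_succ t c q q']
      refine par_append (par_refl _ (cnt_replicate _ _ _ _))
        (par_append ?_ (par_refl _ (cnt_replicate _ _ _ _)))
      rw [sy, if_pos h.1]
      have := Par.act (mkRule t q q') ((mem_PP m i _).2 ⟨t, ht, q, h.1, h.2, q', h2, rfl⟩) Par.nil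
      rw [List.append_nil] at this
      exact this
  · have h0 : cnt m i (blk t (c, q)) = 0 := by rw [cnt_blk _ _ _ _ ht, if_neg h]
    simp only [tr, h, if_false]
    constructor
    · intro hp
      exact ⟨_, rfl, par_cnt_zero hp h0⟩
    · rintro ⟨_, rfl, rfl⟩
      exact par_refl _ h0

theorem frm_congr {σ σ' : ℕ → ℕ × ℕ} {l : List ℕ} (h : ∀ t ∈ l, σ t = σ' t) :
    frm σ l = frm σ' l := by
  induction l with
  | nil => rfl
  | cons t l ih =>
    simp only [frm, List.flatMap_cons] at *
    rw [h t (by simp), ih (fun s hs => h s (by simp [hs]))]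

theorem par_frm {m i : ℕ} {σ : ℕ → ℕ × ℕ} {l : List ℕ} (hl : ∀ t ∈ l, t < 2 * m) (hn : l.Nodup)
    {y : SForm ℕ} (h : Par m i (frm σ l) y) :
    ∃ σ' : ℕ → ℕ × ℕ, (∀ t ∈ l, tr i (σ t) (σ' t)) ∧ y = frm σ' l := by
  induction l generalizing y with
  | nil => cases h; exact ⟨σ, by simp, rfl⟩
  | cons t l ih =>
    obtain ⟨y1, y2, rfl, h1, h2⟩ := par_split (blk t (σ t)) (frm σ l) h
    obtain ⟨p', h3, rfl⟩ := (par_blk (hl t (by simp)) _ _).1 h1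
    obtain ⟨ht, hn⟩ := List.nodup_cons.1 hn
    obtain ⟨σ', h4, rfl⟩ := ih (fun s hs => hl s (by simp [hs])) hn h2
    refine ⟨Function.update σ' t p', ?_, ?_⟩
    · intro s hs
      by_cases hst : s = t
      · subst hst; simpa using h3
      · rw [Function.update_of_ne hst]
        exact h4 s (by simpa [hst] using hs)
    · have : frm (Function.update σ' t p') l = frm σ' l := frm_congr fun s hs =>
        Function.update_of_ne (by rintro rfl; exact ht hs) _ _
      show _ = blk t _ ++ frm _ l
      rw [this]; simp

theorem par_frm' {m i : ℕ} {σ σ' : ℕ → ℕ × ℕ} {l : List ℕ} (hl : ∀ t ∈ l, t < 2 * m)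
    (h : ∀ t ∈ l, tr i (σ t) (σ' t)) : Par m i (frm σ l) (frm σ' l) := by
  induction l with
  | nil => exact Par.nil
  | cons t l ih =>
    exact par_append ((par_blk (hl t (by simp)) _ _).2 ⟨_, h t (by simp), rfl⟩)
      (ih (fun s hs => hl s (by simp [hs])) (fun s hs => h s (by simp [hs])))

theorem cnt_frm {m i : ℕ} {σ : ℕ → ℕ × ℕ} {l : List ℕ} (hl : ∀ t ∈ l, t < 2 * m) :
    cnt m i (frm σ l) = l.countP fun t => decide ((σ t).2 < 9 ∧ (σ t).2 % 3 = i) := by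
  induction l with
  | nil => rfl
  | cons t l ih =>
    show cnt m i (blk t _ ++ frm _ l) = _
    rw [cnt_append, cnt_blk _ _ _ _ (hl t (by simp)), ih (fun s hs => hl s (by simp [hs])),
      List.countP_cons]
    simp only [decide_eq_true_eq]
    omega

theorem zero_frm {σ : ℕ → ℕ × ℕ} {l : List ℕ} : 0 ∉ skel (frm σ l) := by
  induction l with
  | nil => simp [frm]
  | cons t l ih =>
    show 0 ∉ skel (blk t _ ++ frm _ l)
    have hr : ∀ k a : ℕ, skel (List.replicate k (Sum.inr a : Symb ℕ)) = [] := by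
      intro k a
      rw [← List.map_replicate (f := Sum.inr), skel_map_inr]
    simp only [skel_append, blk, hr, List.mem_append, not_or, sy]
    refine ⟨⟨by simp, ?_, by simp⟩, ih⟩
    split_ifs <;> simp
    omega

def Bal (m : ℕ) (g : ℕ → Bool) : Prop :=
  (List.range (2 * m)).countP g = m ∧ (List.range (2 * m)).countP (fun t => !g t) = m

theorem Bal.neg {m : ℕ} {g : ℕ → Bool} (h : Bal m g) : Bal m (fun t => !g t) :=
  ⟨h.2, by simpa using h.1⟩

theorem U_neg (m : ℕ) (g : ℕ → Bool) (a b : ℕ × ℕ) : U m g a b = U m (fun t => !g t) b a := by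
  apply frm_congr
  intro t _
  by_cases h : g t <;> simp [h]

theorem cnt_U {m i : ℕ} {g : ℕ → Bool} (hg : Bal m g) (a b : ℕ × ℕ) :
    cnt m i (U m g a b) = (if a.2 < 9 ∧ a.2 % 3 = i then m else 0) +
      (if b.2 < 9 ∧ b.2 % 3 = i then m else 0) := by
  rw [U, cnt_frm (by simp)]
  have key : ∀ l : List ℕ, l.countP (fun t => decide ((if g t then a else b).2 < 9 ∧
      (if g t then a else b).2 % 3 = i)) =
      (if a.2 < 9 ∧ a.2 % 3 = i then l.countP g else 0) +
      (if b.2 < 9 ∧ b.2 % 3 = i then l.countP (fun t => !g t) else 0) := by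
    intro l
    induction l with
    | nil => simp
    | cons t l ih =>
      simp only [List.countP_cons, ih]
      by_cases h : g t <;> simp only [h] <;> split_ifs <;> simp_all <;> omega
  rw [key, hg.1, hg.2]

def Good (a b : ℕ × ℕ) : Prop :=
  (a.2 < 3 ∧ b.2 = (a.2 + 1) % 3 ∧ a.1 ≤ b.1 ∧ b.1 ≤ a.1 + 1) ∨
  (a.2 < 3 ∧ b.2 = 3 + (a.2 + 2) % 3 ∧ a.1 ≤ b.1 ∧ b.1 ≤ a.1 + 2) ∨
  (3 ≤ a.2 ∧ a.2 ≤ 9 ∧ 3 ≤ b.2 ∧ b.2 ≤ 9 ∧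
    a.1 + (3 - a.2 / 3) ≤ b.1 + (3 - b.2 / 3) + 1 ∧ b.1 + (3 - b.2 / 3) ≤ a.1 + (3 - a.2 / 3) + 1)

theorem core_fin {c q c' q' : ℕ} (h : 3 ≤ q ∧ 3 ≤ q' ∧ q' ≤ 9 ∧
    c + (3 - q / 3) ≤ c' + (3 - q' / 3) + 1 ∧ c' + (3 - q' / 3) ≤ c + (3 - q / 3) + 1)
    (hq : q < 9) : ∃ s0, (∀ s ∈ nxt q, s = s0) ∧ Good (c + 1, s0) (c', q') := by
  by_cases h6 : q < 6
  · refine ⟨6 + (q + 1) % 3, ?_, Or.inr (Or.inr ?_)⟩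
    · simp [nxt, h6, show ¬ q < 3 by omega]
    · simp only
      have : (6 + (q + 1) % 3) / 3 = 2 := by omega
      have : q / 3 = 1 := by omega
      omega
  · refine ⟨9, ?_, Or.inr (Or.inr ?_)⟩
    · simp [nxt, h6, show ¬ q < 3 by omega]
    · simp only
      have : q / 3 = 2 := by omega
      omega

theorem core {c q : ℕ} {b : ℕ × ℕ} (hG : Good (c, q) b ∨ Good b (c, q)) (hq : q < 9)
    (hb : ¬ (b.2 < 9 ∧ b.2 % 3 = q % 3)) :
    (∀ s ∈ nxt q, s < 9 ∧ b.2 < 9 ∧ s % 3 = b.2 % 3) ∨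
    ∃ s0, (∀ s ∈ nxt q, s = s0 ∨ (s < 9 ∧ b.2 < 9 ∧ s % 3 = b.2 % 3)) ∧
      (Good (c + 1, s0) b ∨ Good b (c + 1, s0)) := by
  obtain ⟨c', q'⟩ := b
  rcases hG with (h | h | h) | (h | h | h) <;> simp only at h hb ⊢
  · refine Or.inr ⟨(q + 2) % 3, ?_, Or.inr (Or.inl ?_)⟩
    · simp only [nxt, h, if_true]; simp; omega
    · simp only; omega
  · refine Or.inr ⟨3 + (q + 1) % 3, ?_, Or.inl (Or.inr (Or.inr ?_))⟩
    · simp only [nxt, h, if_true]; simp; omega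
    · simp only
      have : (3 + (q + 1) % 3) / 3 = 1 := by omega
      have : q' / 3 = 1 := by omega
      omega
  · obtain ⟨s0, h1, h2⟩ := core_fin (c := c) (c' := c') (q := q) (q' := q') (by omega) hq
    exact Or.inr ⟨s0, fun s hs => Or.inl (h1 s hs), Or.inl h2⟩
  · refine Or.inr ⟨3 + (q + 1) % 3, ?_, Or.inr (Or.inr (Or.inl ?_))⟩
    · simp only [nxt, show q < 3 by omega, if_true]; simp; omega
    · simp only; omega
  · left
    simp only [nxt, show ¬ q < 3 by omega, if_false, show q < 6 by omega, if_true]; simp; omega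
  · obtain ⟨s0, h1, h2⟩ := core_fin (c := c) (c' := c') (q := q) (q' := q') (by omega) hq
    exact Or.inr ⟨s0, fun s hs => Or.inl (h1 s hs), Or.inl h2⟩

theorem bal_g0 (m : ℕ) : Bal m (g0 m) := by
  have h1 : ∀ k, (List.range k).countP (g0 m) = min k m := by
    intro k
    induction k with
    | zero => simp
    | succ k ih =>
      rw [List.range_succ, List.countP_append, ih, List.countP_singleton]
      simp only [g0, decide_eq_true_eq]; split_ifs <;> omega
  have h2 : ∀ k, (List.range k).countP (fun t => !g0 m t) = k - m := by
    intro k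
    induction k with
    | zero => simp
    | succ k ih =>
      rw [List.range_succ, List.countP_append, ih, List.countP_singleton]
      simp only [g0, Bool.not_eq_true', decide_eq_false_iff_not]; split_ifs <;> omega
  constructor
  · rw [h1]; omega
  · rw [h2]; omega

def Inv (m : ℕ) (x : SForm ℕ) : Prop :=
  x = [Sum.inl 0] ∨ (0 ∉ skel x ∧ ∃ i, m < cnt m i x) ∨
    ∃ g a b, Bal m g ∧ Good a b ∧ x = U m g a b

theorem countP_lt {l : List ℕ} {p q : ℕ → Bool} (h : ∀ t ∈ l, p t = true → q t = true) {t : ℕ}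
    (ht : t ∈ l) (hp : p t = false) (hq : q t = true) : l.countP p < l.countP q := by
  induction l with
  | nil => simp at ht
  | cons s l ih =>
    simp only [List.countP_cons]
    rcases List.mem_cons.1 ht with rfl | ht
    · have := List.countP_mono_left (l := l) (p := p) (q := q) (fun x hx => h x (by simp [hx]))
      simp [hp, hq]; omega
    · have h1 := ih (fun x hx => h x (by simp [hx])) ht
      have h2 := h s (by simp)
      by_cases hs : p s = true
      · simp [hs, h2 hs]; exact h1
      · simp [hs]; split_ifs <;> omega

theorem step_active {m : ℕ} {g : ℕ → Bool} {a b : ℕ × ℕ} (hg : Bal m g)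
    (hG : Good a b ∨ Good b a) (ha : a.2 < 9) (hb : ¬ (b.2 < 9 ∧ b.2 % 3 = a.2 % 3))
    {y : SForm ℕ} (hp : Par m (a.2 % 3) (U m g a b) y) (hm : 1 ≤ m) : Inv m y := by
  obtain ⟨c, q⟩ := a
  simp only at ha hb hp
  obtain ⟨σ', h1, rfl⟩ := par_frm (by simp) List.nodup_range hp
  have hA : ∀ t ∈ List.range (2 * m), g t = true → (σ' t).1 = c + 1 ∧ (σ' t).2 ∈ nxt q := by
    intro t ht hgt
    have := h1 t ht
    simp only [hgt, if_true, tr, ha, and_self] at this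
    exact this
  have hB : ∀ t ∈ List.range (2 * m), g t = false → σ' t = b := by
    intro t ht hgt
    have := h1 t ht
    simpa [hgt, tr, hb] using this
  have dead : ∀ t ∈ List.range (2 * m), g t = true →
      ((σ' t).2 < 9 ∧ b.2 < 9 ∧ (σ' t).2 % 3 = b.2 % 3) → Inv m (frm σ' (List.range (2 * m))) := by
    intro t ht hgt hd
    refine Or.inr (Or.inl ⟨zero_frm, b.2 % 3, ?_⟩)
    rw [cnt_frm (by simp)]
    have := countP_lt (l := List.range (2 * m)) (p := fun t => !g t)
      (q := fun t => decide ((σ' t).2 < 9 ∧ (σ' t).2 % 3 = b.2 % 3)) (by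
        intro s hs hgs
        rw [hB s hs (by simpa using hgs)]
        simp [hd.2.1]) ht (by simp [hgt]) (by simp [hd])
    rwa [hg.2] at this
  rcases core hG ha hb with h | ⟨s0, h2, h3⟩
  · have hpos : 0 < (List.range (2 * m)).countP g := by rw [hg.1]; omega
    obtain ⟨t, ht, hgt⟩ := List.countP_pos_iff.1 hpos
    exact dead t ht hgt (h _ (hA t ht hgt).2)
  · by_cases hd : ∃ t ∈ List.range (2 * m), g t = true ∧
      ((σ' t).2 < 9 ∧ b.2 < 9 ∧ (σ' t).2 % 3 = b.2 % 3)
    · obtain ⟨t, ht, hgt, hd⟩ := hd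
      exact dead t ht hgt hd
    · have hU : frm σ' (List.range (2 * m)) = U m g (c + 1, s0) b := by
        apply frm_congr
        intro t ht
        by_cases hgt : g t = true
        · rw [if_pos hgt]
          obtain ⟨k1, k2⟩ := hA t ht hgt
          rcases h2 _ k2 with h | h
          · exact Prod.ext k1 h
          · exact absurd ⟨t, ht, hgt, h⟩ hd
        · rw [if_neg hgt]
          exact hB t ht (by simpa using hgt)
      rw [hU]
      rcases h3 with h3 | h3
      · exact Or.inr (Or.inr ⟨g, _, _, hg, h3, rfl⟩)
      · exact Or.inr (Or.inr ⟨_, _, _, hg.neg, h3, U_neg _ _ _ _⟩)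

theorem init_steps {m i k : ℕ} {y : SForm ℕ}
    (h : StepsN (SR m i ++ PP m i) k [Sum.inl 0] y) :
    y = [Sum.inl 0] ∨ (i = 1 ∧ y = U m (g0 m) (0, 2) (0, 0)) := by
  refine stepsN_inv (fun y => y = [Sum.inl 0] ∨ (i = 1 ∧ y = U m (g0 m) (0, 2) (0, 0))) ?_ k
    (Or.inl rfl) h
  rintro x y (rfl | ⟨rfl, rfl⟩) hs
  · obtain ⟨r, hr, u, v, hx, rfl⟩ := hs
    have hu : u = [] ∧ v = [] ∧ r.1 = 0 := by
      cases u with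
      | nil => simp at hx; exact ⟨rfl, hx.2, hx.1.symm⟩
      | cons s u => simp at hx
    obtain ⟨rfl, rfl, hr0⟩ := hu
    rcases List.mem_append.1 hr with h | h
    · unfold SR at h
      split_ifs at h with hi
      · simp only [List.mem_cons, List.not_mem_nil, or_false] at h
        rcases h with rfl | rfl
        · left; rfl
        · right; exact ⟨hi, by simp⟩
      · simp at h
    · exact absurd hr0 (zero_rule h).1
  · exfalso
    have := (rstep_iff_cnt m 1 (U m (g0 m) (0, 2) (0, 0))).1 ⟨_, (rstep_SR zero_frm hs).1⟩
    rw [cnt_U (bal_g0 m)] at this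
    simp at this

theorem inv_step {m : ℕ} (hm : 1 ≤ m) {x y : SForm ℕ} (hx : Inv m x)
    (h : (GG m).ModeStep (Mode.conj Mode.t (Mode.eq m)) x y) : Inv m y := by
  rcases hx with rfl | ⟨h0, j, hj⟩ | ⟨g, a, b, hg, hG, rfl⟩
  · obtain ⟨i, k, h1, -⟩ := h
    rcases init_steps h1 with h | ⟨-, h⟩
    · exact Or.inl h
    · exact Or.inr (Or.inr ⟨_, _, _, bal_g0 m, Or.inl (by simp), h⟩)
  · obtain ⟨i, -, h1, h2⟩ := (mode_iff m h0).1 h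
    have hij : i ≠ j := by rintro rfl; omega
    exact Or.inr (Or.inl ⟨par_zero h2 h0, j, lt_of_lt_of_le hj (par_cnt_mono hij h2)⟩)
  · obtain ⟨i, -, h1, h2⟩ := (mode_iff m zero_frm).1 h
    have h1' : cnt m i (U m g a b) = m := h1
    have h2' : Par m i (U m g a b) y := h2
    rw [cnt_U hg] at h1'
    by_cases ha : a.2 < 9 ∧ a.2 % 3 = i
    · by_cases hb : b.2 < 9 ∧ b.2 % 3 = i
      · rw [if_pos ha, if_pos hb] at h1'; omega
      · obtain ⟨ha, rfl⟩ := ha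
        exact step_active hg (Or.inl hG) ha hb h2' hm
    · by_cases hb : b.2 < 9 ∧ b.2 % 3 = i
      · obtain ⟨hb, rfl⟩ := hb
        rw [U_neg] at h2'
        exact step_active hg.neg (Or.inr hG) hb ha h2' hm
      · rw [if_neg ha, if_neg hb] at h1'; omega

def wd (f : ℕ → ℕ) (n : ℕ) : List ℕ :=
  (List.range n).flatMap fun t => List.replicate (f t) (2 * t) ++ List.replicate (f t) (2 * t + 1)

theorem wd_succ (f : ℕ → ℕ) (n : ℕ) : wd f (n + 1) =
    wd f n ++ (List.replicate (f n) (2 * n) ++ List.replicate (f n) (2 * n + 1)) := by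
  simp [wd, List.range_succ]

theorem wd_count (f : ℕ → ℕ) (n j : ℕ) :
    (wd f n).count j = if j < 2 * n then f (j / 2) else 0 := by
  induction n with
  | zero => simp [wd]
  | succ n ih =>
    rw [wd_succ, List.count_append, List.count_append, ih, List.count_replicate,
      List.count_replicate]
    simp only [beq_iff_eq]
    by_cases h1 : j < 2 * n
    · rw [if_pos h1, if_neg (by omega), if_neg (by omega), if_pos (by omega)]; rfl
    · rw [if_neg h1]
      by_cases h2 : 2 * n = j
      · rw [if_pos h2, if_neg (by omega), if_pos (by omega), show j / 2 = n by omega]; omega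
      · rw [if_neg h2]
        by_cases h3 : 2 * n + 1 = j
        · rw [if_pos h3, if_pos (by omega), show j / 2 = n by omega]; omega
        · rw [if_neg h3, if_neg (by omega)]

theorem wd_sorted (f : ℕ → ℕ) (n : ℕ) : (wd f n).Pairwise (· ≤ ·) := by
  induction n with
  | zero => simp [wd]
  | succ n ih =>
    rw [wd_succ]
    refine List.pairwise_append.2 ⟨ih, List.pairwise_append.2 ⟨?_, ?_, ?_⟩, ?_⟩
    · exact List.pairwise_replicate.2 (Or.inr le_rfl)
    · exact List.pairwise_replicate.2 (Or.inr le_rfl)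
    · intro a ha b hb
      rw [List.eq_of_mem_replicate ha, List.eq_of_mem_replicate hb]; omega
    · intro a ha b hb
      have h1 : a < 2 * n := by
        by_contra hc
        have := wd_count f n a
        rw [if_neg hc] at this
        exact (List.count_pos_iff.2 ha).ne' this
      rcases List.mem_append.1 hb with h | h <;> rw [List.eq_of_mem_replicate h] <;> omega

theorem terms_frm (σ : ℕ → ℕ × ℕ) (n : ℕ) :
    terms (frm σ (List.range n)) = wd (fun t => (σ t).1) n := by
  have hr : ∀ k a : ℕ, terms (List.replicate k (Sum.inr a : Symb ℕ)) = List.replicate k a := by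
    intro k a
    rw [← List.map_replicate (f := Sum.inr), terms_map_inr]
  have hsy : ∀ t q, terms (sy t q) = [] := by
    intro t q; unfold sy; split_ifs <;> simp
  induction n with
  | zero => rfl
  | succ n ih =>
    rw [wd_succ, ← ih]
    simp [frm, List.range_succ, terms_append, blk, hr, hsy]

theorem frm_done (f : ℕ → ℕ) (n : ℕ) :
    frm (fun t => (f t, 9)) (List.range n) = (wd f n).map Sum.inr := by
  induction n with
  | zero => rfl
  | succ n ih =>
    rw [wd_succ, List.map_append, ← ih]
    simp [frm, List.range_succ, blk, sy]

theorem sound {m : ℕ} (hm : 1 ≤ m) {w : List ℕ}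
    (hw : w ∈ (GG m).lang (Mode.conj Mode.t (Mode.eq m))) :
    w.Pairwise (· ≤ ·) ∧ ∀ i j, i < 4 * m → j < 4 * m → w.count i ≤ w.count j + 1 := by
  have hI : Inv m (w.map Sum.inr) := by
    have h : Relation.ReflTransGen _ _ _ := Relation.TransGen.to_reflTransGen hw
    have : ∀ y, Relation.ReflTransGen ((GG m).ModeStep (Mode.conj Mode.t (Mode.eq m)))
        [Sum.inl (GG m).start] y → Inv m y := by
      intro y hy
      induction hy with
      | refl => exact Or.inl rfl
      | tail _ h ih => exact inv_step hm ih h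
    exact this _ h
  rcases hI with h | ⟨h0, j, hj⟩ | ⟨g, a, b, hg, hG, h⟩
  · have := congrArg skel h
    rw [skel_map_inr] at this
    simp at this
  · unfold cnt at hj
    rw [skel_map_inr] at hj
    simp at hj
  · have hc : ∀ i, cnt m i (U m g a b) = 0 := by
      intro i; rw [← h, cnt, skel_map_inr]; rfl
    have ha : ¬ a.2 < 9 := by
      intro ha
      have := hc (a.2 % 3)
      rw [cnt_U hg, if_pos ⟨ha, rfl⟩] at this
      omega
    have hb : ¬ b.2 < 9 := by
      intro hb
      have := hc (b.2 % 3)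
      rw [cnt_U hg, if_pos (c := b.2 < 9 ∧ _) ⟨hb, rfl⟩] at this
      omega
    have hab : a.1 ≤ b.1 + 1 ∧ b.1 ≤ a.1 + 1 := by
      unfold Good at hG
      have h3 : a.2 ≤ 9 ∧ b.2 ≤ 9 := by omega
      have h4 : a.2 = 9 := by omega
      have h5 : b.2 = 9 := by omega
      rw [h4, h5] at hG
      omega
    have hw' : w = wd (fun t => (if g t then a else b).1) (2 * m) := by
      rw [← terms_frm, ← terms_map_inr w, h]; rfl
    rw [hw']
    refine ⟨wd_sorted _ _, fun i j hi hj => ?_⟩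
    rw [wd_count, wd_count, if_pos (show i < 2 * (2 * m) by omega), if_pos (show j < 2 * (2 * m) by omega)]
    by_cases h1 : g (i / 2) <;> by_cases h2 : g (j / 2) <;> simp only [h1, h2] <;> simp <;> omega

theorem ustep {m : ℕ} {g : ℕ → Bool} (hg : Bal m g) {c q s : ℕ} {b : ℕ × ℕ} (hq : q < 9)
    (hb : ¬ (b.2 < 9 ∧ b.2 % 3 = q % 3)) (hs : s ∈ nxt q) :
    (GG m).ModeStep (Mode.conj Mode.t (Mode.eq m)) (U m g (c, q) b) (U m g (c + 1, s) b) := by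
  refine (mode_iff m zero_frm).2 ⟨q % 3, by omega, ?_, ?_⟩
  · have := cnt_U (i := q % 3) hg (c, q) b
    rw [if_pos ⟨hq, rfl⟩, if_neg hb] at this
    exact this
  · apply par_frm' (by simp)
    intro t _
    by_cases h : g t
    · simp [h, tr, hq, hs]
    · simp [h, tr, hb]

theorem ustep' {m : ℕ} {g : ℕ → Bool} (hg : Bal m g) {c q s : ℕ} {b : ℕ × ℕ} (hq : q < 9)
    (hb : ¬ (b.2 < 9 ∧ b.2 % 3 = q % 3)) (hs : s ∈ nxt q) :
    (GG m).ModeStep (Mode.conj Mode.t (Mode.eq m)) (U m g b (c, q)) (U m g b (c + 1, s)) := by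
  rw [U_neg m g b, U_neg m g b]
  exact ustep hg.neg hq hb hs

theorem first_step {m : ℕ} (hm : 1 ≤ m) : (GG m).ModeStep (Mode.conj Mode.t (Mode.eq m))
    [Sum.inl 0] (U m (g0 m) (0, 2) (0, 0)) := by
  refine ⟨⟨1, by show 1 < 3; omega⟩, m, ?_, ?_, rfl⟩
  · have : ∀ k, StepsN (SR m 1 ++ PP m 1) (k + 1) [Sum.inl 0] (U m (g0 m) (0, 2) (0, 0)) := by
      intro k
      induction k with
      | zero =>
        exact ⟨_, ⟨(0, U m (g0 m) (0, 2) (0, 0)), by simp [SR], [], [], rfl, rfl⟩, by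
          simp [StepsN]⟩
      | succ k ih =>
        exact ⟨[Sum.inl 0], ⟨(0, [Sum.inl 0]), by simp [SR], [], [], rfl, rfl⟩, ih⟩
    obtain ⟨k, rfl⟩ : ∃ k, m = k + 1 := ⟨m - 1, by omega⟩
    exact this k
  · rintro ⟨z, hz⟩
    have hz' : RStep (SR m 1 ++ PP m 1) (U m (g0 m) (0, 2) (0, 0)) z := hz
    have := (rstep_iff_cnt m 1 (U m (g0 m) (0, 2) (0, 0))).1 ⟨_, (rstep_SR zero_frm hz').1⟩
    rw [cnt_U (bal_g0 m)] at this
    simp at this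

theorem loop {m : ℕ} (n : ℕ) : ∃ q < 3,
    Relation.ReflTransGen ((GG m).ModeStep (Mode.conj Mode.t (Mode.eq m)))
      (U m (g0 m) (0, 2) (0, 0)) (U m (g0 m) (n, q) (n, (q + 1) % 3)) := by
  induction n with
  | zero => exact ⟨2, by omega, Relation.ReflTransGen.refl⟩
  | succ n ih =>
    obtain ⟨q, hq, h⟩ := ih
    refine ⟨(q + 2) % 3, by omega, ?_⟩
    refine (h.tail (ustep (s := (q + 2) % 3) (bal_g0 m) (by omega) ?_ ?_)).tail
      (ustep' (bal_g0 m) (by omega) ?_ ?_)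
    · simp only; omega
    · simp [nxt, hq]
    · simp only; omega
    · rw [nxt, if_pos (by omega)]; simp <;> omega

theorem complete {m : ℕ} (hm : 1 ≤ m) (n : ℕ) :
    ∃ w ∈ (GG m).lang (Mode.conj Mode.t (Mode.eq m)), n ≤ w.count 0 := by
  obtain ⟨q, hq, h⟩ := loop (m := m) n
  have hB := bal_g0 m
  have e1 := ustep' hB (c := n) (q := (q + 1) % 3) (s := 3 + (q + 2) % 3) (b := (n, q))
    (by omega) (by simp only; omega) (by rw [nxt, if_pos (by omega)]; simp <;> omega)
  have e2 := ustep hB (c := n) (q := q) (s := 3 + (q + 1) % 3) (b := (n + 1, 3 + (q + 2) % 3))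
    (by omega) (by simp only; omega) (by rw [nxt, if_pos (by omega)]; simp)
  have e3 := ustep' hB (c := n + 1) (q := 3 + (q + 2) % 3) (s := 6 + q)
    (b := (n + 1, 3 + (q + 1) % 3))
    (by omega) (by simp only; omega)
    (by rw [nxt, if_neg (by omega), if_pos (by omega)]; simp <;> omega)
  have e4 := ustep' hB (c := n + 1 + 1) (q := 6 + q) (s := 9)
    (b := (n + 1, 3 + (q + 1) % 3))
    (by omega) (by simp only; omega)
    (by rw [nxt, if_neg (by omega), if_neg (by omega)]; simp)
  have e5 := ustep hB (c := n + 1) (q := 3 + (q + 1) % 3) (s := 6 + (q + 2) % 3)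
    (b := (n + 1 + 1 + 1, 9))
    (by omega) (by simp only; omega)
    (by rw [nxt, if_neg (by omega), if_pos (by omega)]; simp <;> omega)
  have e6 := ustep hB (c := n + 1 + 1) (q := 6 + (q + 2) % 3) (s := 9)
    (b := (n + 1 + 1 + 1, 9))
    (by omega) (by simp only; omega)
    (by rw [nxt, if_neg (by omega), if_neg (by omega)]; simp)
  have hfin : U m (g0 m) (n + 1 + 1 + 1, 9) (n + 1 + 1 + 1, 9) =
      (wd (fun _ => n + 3) (2 * m)).map Sum.inr := by
    rw [← frm_done]
    apply frm_congr
    intro t _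
    simp
  refine ⟨wd (fun _ => n + 3) (2 * m), ?_, ?_⟩
  · show Relation.TransGen _ _ _
    rw [← hfin]
    exact Relation.TransGen.head' (first_step hm)
      ((((((h.tail e1).tail e2).tail e3).tail e4).tail e5).tail e6)
  · rw [wd_count, if_pos (by omega)]; omega

theorem GG_lamFree {m : ℕ} (hm : 1 ≤ m) : (GG m).LamFree := by
  intro i r hr
  rcases List.mem_append.1 hr with h | h
  · unfold SR at h
    split_ifs at h
    · simp only [List.mem_cons, List.not_mem_nil, or_false] at h
      rcases h with rfl | rfl
      · simp
      · intro h
        have h' : U m (g0 m) (0, 2) (0, 0) = [] := h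
        have := cnt_U (i := 2) (bal_g0 m) (0, 2) (0, 0)
        rw [h'] at this
        simp [cnt_nil] at this
        omega
    · simp at h
  · obtain ⟨t, ht, q, h1, h2, q', h3, rfl⟩ := (mem_PP _ _ _).1 h
    simp [mkRule]

/-- For every m ∈ ℕ (positive),
L_m(CD_3, CF[−λ], (t∧=m)) ⊊ L(CD_3, CF[−λ], (t∧=m)),
both with and without erasing rules. -/
theorem stmt17 (lf : Bool) (m : ℕ) (hm : 1 ≤ m) :
    CDFamInd ℕ lf 3 (Mode.conj Mode.t (Mode.eq m)) m ⊂
      CDFam ℕ lf 3 (Mode.conj Mode.t (Mode.eq m)) := by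
  refine ⟨?_, fun hsub => ?_⟩
  · rintro L ⟨G, h1, h2, h3, -⟩
    exact ⟨G, h1, h2, h3⟩
  · refine lower lf 3 m hm ((GG m).lang (Mode.conj Mode.t (Mode.eq m)))
      (fun w hw => (sound hm hw).1) (fun w hw => (sound hm hw).2) (complete hm) (hsub ?_)
    exact ⟨GG m, le_rfl, fun _ => GG_lamFree hm, rfl⟩

end CDHybrid
end

section
/- For every m ∈ ℕ, under the finite index restriction the appearance checking feature does not increase the generative power of programmed grammars: L_m(P, CF[−λ], ac) = L_m(P, CF[−λ]), both with and without erasing rules. -/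
namespace CDHybrid

/-- The multiset of nonterminals of a sentential form. -/
def nts (x : SForm ℕ) : Multiset ℕ := ((x.filterMap Sum.getLeft? : List ℕ) : Multiset ℕ)

theorem nts_append (x y : SForm ℕ) : nts (x ++ y) = nts x + nts y := by
  simp [nts]

theorem nts_inl (a : ℕ) (v : SForm ℕ) : nts (Sum.inl a :: v) = {a} + nts v := by
  simp [nts]

theorem nts_one (a : ℕ) : nts ([Sum.inl a] : SForm ℕ) = {a} := by
  simp [nts]

theorem mem_nts (a : ℕ) (x : SForm ℕ) : a ∈ nts x ↔ Sum.inl a ∈ x := by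
  simp [nts]

theorem card_nts (x : SForm ℕ) : (nts x).card = ntCount x := by
  induction x with
  | nil => rfl
  | cons a x ih =>
    cases a with
    | inl a => simpa [nts, ntCount, List.filter_cons, List.filterMap_cons] using ih
    | inr a => simpa [nts, ntCount, List.filter_cons, List.filterMap_cons] using ih

theorem nts_step (u v z : SForm ℕ) (a : ℕ) :
    nts (u ++ z ++ v) + {a} = nts (u ++ Sum.inl a :: v) + nts z := by
  simp only [nts_append, nts_inl]
  abel

theorem le_conf {m K : ℕ} {N : Multiset ℕ} (h1 : N.card ≤ m) (h2 : ∀ a ∈ N, a < K) :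
    N ≤ m • Multiset.range K := by
  rw [Multiset.le_iff_count]
  intro a
  by_cases ha : a ∈ N
  · rw [Multiset.count_nsmul,
      Multiset.count_eq_one_of_mem (Multiset.nodup_range K) (by simpa using h2 a ha)]
    have := Multiset.count_le_card a N
    simp
    omega
  · rw [Multiset.count_eq_zero_of_notMem ha]
    exact Nat.zero_le _

/-- Recorded multisets. -/
abbrev Conf (m K : ℕ) := {N : Multiset ℕ // N ∈ Set.Iic (m • Multiset.range K)}

theorem conf_lt {m K : ℕ} (c : Conf m K) {a : ℕ} (h : a ∈ c.1) : a < K := by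
  have := Multiset.mem_of_le c.2 h
  have := Multiset.mem_of_mem_nsmul this
  simpa using this

/-- Labels of the simulating grammar. -/
abbrev Lab (G : PG ℕ) (m K : ℕ) := Option (Fin G.nLab × Conf m K)

open Classical in
/-- Rules of the simulating grammar. -/
noncomputable def srule (G : PG ℕ) (m K : ℕ) : Lab G m K → Rule ℕ
  | none => (K, [Sum.inl G.start])
  | some (r, c) =>
    if (G.rule r).1 ∈ c.1 then G.rule r
    else if h : ∃ b, b ∈ c.1 then (h.choose, [Sum.inl h.choose])
    else (K, [Sum.inl G.start])

/-- Success fields of the simulating grammar. -/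
def ssucc (G : PG ℕ) (m K : ℕ) : Lab G m K → Lab G m K → Prop
  | none, l' => ∃ r c, l' = some (r, c) ∧ c.1 = {G.start}
  | some (r, c), l' => ∃ r' c', l' = some (r', c') ∧
      (((G.rule r).1 ∈ c.1 ∧ r' ∈ G.succ r ∧ c'.1 + {(G.rule r).1} = c.1 + nts (G.rule r).2) ∨
       ((G.rule r).1 ∉ c.1 ∧ (∃ b, b ∈ c.1) ∧ r' ∈ G.fail r ∧ c' = c))

/-- The simulating grammar. -/
noncomputable def simG (G : PG ℕ) (m K n : ℕ) (e : Fin n ≃ Lab G m K) : PG ℕ where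
  start := K
  nLab := n
  rule l := srule G m K (e l)
  succ l := {l' | ssucc G m K (e l) (e l')}
  fail _ := ∅

theorem sim_sound (G : PG ℕ) (m K n : ℕ) (e : Fin n ≃ Lab G m K) (r₁ : Fin n)
    (q : SForm ℕ × Fin n)
    (h : Relation.ReflTransGen (simG G m K n e).PStep ([Sum.inl K], r₁) q) :
    q.1 = [Sum.inl K] ∨ ∃ r c r₀, e q.2 = some (r, c) ∧ nts q.1 = c.1 ∧
      Relation.ReflTransGen G.PStep ([Sum.inl G.start], r₀) (q.1, r) := by
  induction h with
  | refl => exact Or.inl rfl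
  | @tail p q _ hs ih =>
    right
    obtain ⟨x, l⟩ := p
    obtain ⟨y, l'⟩ := q
    rcases hs with ⟨u, v, hx, hy, hl⟩ | ⟨_, _, hl⟩
    swap
    · exact absurd hl (Set.notMem_empty _)
    change x = u ++ Sum.inl (srule G m K (e l)).1 :: v at hx
    change y = u ++ (srule G m K (e l)).2 ++ v at hy
    change ssucc G m K (e l) (e l') at hl
    change x = [Sum.inl K] ∨ ∃ r c r₀, e l = some (r, c) ∧ nts x = c.1 ∧
      Relation.ReflTransGen G.PStep ([Sum.inl G.start], r₀) (x, r) at ih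
    change ∃ r c r₀, e l' = some (r, c) ∧ nts y = c.1 ∧
      Relation.ReflTransGen G.PStep ([Sum.inl G.start], r₀) (y, r)
    have hmem : (srule G m K (e l)).1 ∈ nts x := by rw [mem_nts, hx]; simp
    have hn := nts_step u v (srule G m K (e l)).2 (srule G m K (e l)).1
    rw [← hx, ← hy] at hn
    generalize e l = L at *
    generalize e l' = L' at *
    rcases L with _ | ⟨r, c⟩
    · obtain ⟨r, c, rfl, hc⟩ := hl
      rcases ih with rfl | ⟨_, _, _, h, _⟩
      · refine ⟨r, c, r, rfl, ?_, ?_⟩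
        · simp only [srule, nts_one] at hn
          rw [hc]
          rw [add_comm] at hn
          exact add_left_cancel hn
        · simp only [srule] at hx hy
          have : u = [] ∧ v = [] := by
            have := congrArg List.length hx
            simp at this
            constructor <;> apply List.eq_nil_of_length_eq_zero <;> omega
          obtain ⟨rfl, rfl⟩ := this
          simp at hy
          rw [hy]
      · cases h
    · obtain ⟨r', c', rfl, hl⟩ := hl
      rcases hl with ⟨ha, hr, hc⟩ | ⟨ha, hb, hr, hc⟩
      · have hR : srule G m K (some (r, c)) = G.rule r := by simp [srule, ha]
        rw [hR] at hx hy hn hmem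
        rcases ih with rfl | ⟨r1, c1, r₀, h, h2, h3⟩
        · rw [nts_one] at hmem
          have := conf_lt c ha
          simp at hmem
          omega
        · simp only [Option.some.injEq, Prod.mk.injEq] at h
          obtain ⟨rfl, rfl⟩ := h
          refine ⟨r', c', r₀, rfl, ?_, h3.tail (Or.inl ⟨u, v, hx, hy, hr⟩)⟩
          rw [h2, ← hc] at hn
          exact add_right_cancel hn
      · have hR : srule G m K (some (r, c)) = (hb.choose, [Sum.inl hb.choose]) := by
          simp [srule, ha, hb]
        rw [hR] at hx hy hn hmem
        have hxy : y = x := by rw [hx, hy]; simp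
        rcases ih with rfl | ⟨r1, c1, r₀, h, h2, h3⟩
        · rw [nts_one] at hmem
          have := conf_lt c hb.choose_spec
          simp only [Multiset.mem_singleton] at hmem
          omega
        · simp only [Option.some.injEq, Prod.mk.injEq] at h
          obtain ⟨rfl, rfl⟩ := h
          subst hxy hc
          refine ⟨r', _, r₀, rfl, h2, h3.tail (Or.inr ⟨?_, rfl, hr⟩)⟩
          rw [← mem_nts]
          simpa [h2] using ha

theorem sim_complete (G : PG ℕ) (m K n : ℕ) (hm : 1 ≤ m) (e : Fin n ≃ Lab G m K)
    (hS : G.start < K) (hK : ∀ r, ∀ a ∈ nts (G.rule r).2, a < K) (r₁ : Fin G.nLab)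
    (q : SForm ℕ × Fin G.nLab)
    (h : Relation.ReflTransGen (fun p q => G.PStep p q ∧ ntCount q.1 ≤ m)
      ([Sum.inl G.start], r₁) q) :
    ∃ r' c, c.1 = nts q.1 ∧ (c.1 = 0 ∨ r' = q.2) ∧
      Relation.ReflTransGen (fun p q => (simG G m K n e).PStep p q ∧ ntCount q.1 ≤ m)
        ([Sum.inl K], e.symm none) (q.1, e.symm (some (r', c))) := by
  induction h with
  | refl =>
    have h0 : ({G.start} : Multiset ℕ) ≤ m • Multiset.range K :=
      le_conf (by simpa using hm) (by simpa using hS)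
    refine ⟨r₁, ⟨{G.start}, h0⟩,
      (nts_one _).symm, Or.inr rfl, Relation.ReflTransGen.single ⟨Or.inl ⟨[], [], ?_, ?_, ?_⟩, ?_⟩⟩
    · simp [simG, srule]
    · simp [simG, srule]
    · change ssucc G m K (e _) (e _)
      rw [Equiv.apply_symm_apply, Equiv.apply_symm_apply]
      exact ⟨_, _, rfl, rfl⟩
    · rw [← card_nts, nts_one]
      simpa using hm
  | @tail p q _ hs ih =>
    obtain ⟨x, r⟩ := p
    obtain ⟨y, s⟩ := q
    obtain ⟨r', c, hc, hr, hd⟩ := ih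
    obtain ⟨hs, hb⟩ := hs
    dsimp only at *
    rcases hs with ⟨u, v, hx, hy, hl⟩ | ⟨hx, hy, hl⟩ <;> dsimp only at *
    · have ha : (G.rule r).1 ∈ c.1 := by rw [hc, mem_nts, hx]; simp
      have hn := nts_step u v (G.rule r).2 (G.rule r).1
      rw [← hx, ← hy, ← hc] at hn
      have hrr : r' = r := by
        rcases hr with h | h
        · rw [h] at ha
          simp at ha
        · exact h
      subst hrr
      have hlt : ∀ a ∈ nts y, a < K := by
        intro a hay
        have : a ∈ c.1 + nts (G.rule r').2 := by
          rw [← hn]; exact Multiset.mem_add.2 (Or.inl hay)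
        rcases Multiset.mem_add.1 this with h | h
        · exact conf_lt c h
        · exact hK _ _ h
      have hR : srule G m K (some (r', c)) = G.rule r' := by simp [srule, ha]
      refine ⟨s, ⟨nts y, le_conf (by rw [card_nts]; exact hb) hlt⟩, rfl, Or.inr rfl,
        hd.tail ⟨Or.inl ⟨u, v, ?_, ?_, ?_⟩, hb⟩⟩
      · simpa [simG, hR] using hx
      · simpa [simG, hR] using hy
      · change ssucc G m K (e _) (e _)
        rw [Equiv.apply_symm_apply, Equiv.apply_symm_apply]
        exact ⟨_, _, rfl, Or.inl ⟨ha, hl, hn⟩⟩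
    · subst hy
      by_cases hc0 : c.1 = 0
      · exact ⟨r', c, hc, Or.inl hc0, hd⟩
      · have hrr : r' = r := hr.resolve_left hc0
        subst hrr
        have ha : (G.rule r').1 ∉ c.1 := by rwa [hc, mem_nts]
        have hB : ∃ b, b ∈ c.1 := Multiset.exists_mem_of_ne_zero hc0
        have hR : srule G m K (some (r', c)) = (hB.choose, [Sum.inl hB.choose]) := by
          simp [srule, ha, hB]
        have hmem : Sum.inl hB.choose ∈ y := by
          rw [← mem_nts, ← hc]; exact hB.choose_spec
        obtain ⟨u, v, huv⟩ := List.append_of_mem hmem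
        refine ⟨s, c, hc, Or.inr rfl, hd.tail ⟨Or.inl ⟨u, v, ?_, ?_, ?_⟩, hb⟩⟩
        · simpa only [simG, Equiv.apply_symm_apply, hR] using huv
        · simp only [simG, Equiv.apply_symm_apply, hR]
          simpa using huv
        · change ssucc G m K (e _) (e _)
          rw [Equiv.apply_symm_apply, Equiv.apply_symm_apply]
          exact ⟨_, _, rfl, Or.inr ⟨ha, hB, hl, rfl⟩⟩

theorem langB_sub {G : PG ℕ} {m : ℕ} : G.langB m ⊆ G.lang := by
  rintro w ⟨r₁, r₂, _, h⟩
  exact ⟨r₁, r₂, h.lift id (fun _ _ h => h.1)⟩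

theorem exists_bound_s19 (G : PG ℕ) :
    ∃ K, G.start < K ∧ ∀ r, ∀ a ∈ nts (G.rule r).2, a < K := by
  refine ⟨G.start + 1 + ∑ r, (nts (G.rule r).2).sum, by omega, ?_⟩
  intro r a ha
  have h1 : a ≤ (nts (G.rule r).2).sum := Multiset.le_sum_of_mem ha
  have h2 : (nts (G.rule r).2).sum ≤ ∑ r, (nts (G.rule r).2).sum :=
    Finset.single_le_sum (f := fun r => (nts (G.rule r).2).sum)
      (fun _ _ => Nat.zero_le _) (Finset.mem_univ r)
  omega

theorem sim_main (G : PG ℕ) (m : ℕ) (hm : 1 ≤ m) (hG : G.lang ⊆ G.langB m) :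
    ∃ G' : PG ℕ, (G.LamFree → G'.LamFree) ∧ G'.NoAC ∧ G'.lang = G.lang ∧
      G'.lang ⊆ G'.langB m := by
  obtain ⟨K, hS, hK⟩ := exists_bound_s19 G
  have hfin : Finite (Conf m K) := (Set.finite_Iic (m • Multiset.range K)).to_subtype
  obtain ⟨n, ⟨e'⟩⟩ := Finite.exists_equiv_fin (Lab G m K)
  let e := e'.symm
  have h1 : (simG G m K n e).lang ⊆ G.lang := by
    rintro w ⟨r₁, r₂, h⟩
    rcases sim_sound G m K n e r₁ _ h with h | ⟨r, c, r₀, _, _, h⟩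
    · exfalso
      have : Sum.inl K ∈ w.map (Sum.inr : ℕ → Symb ℕ) := by
        have h' : w.map (Sum.inr : ℕ → Symb ℕ) = [Sum.inl K] := h
        rw [h']; simp
      simp at this
    · exact ⟨r₀, r, h⟩
  have h2 : G.langB m ⊆ (simG G m K n e).langB m := by
    rintro w ⟨r₁, r₂, _, h⟩
    obtain ⟨r', c, _, _, h⟩ := sim_complete G m K n hm e hS hK r₁ _ h
    exact ⟨_, _, by rw [← card_nts, nts_one]; simpa using hm, h⟩
  refine ⟨simG G m K n e, ?_, fun _ => rfl, ?_, ?_⟩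
  · intro hl l
    change (srule G m K (e l)).2 ≠ []
    generalize e l = L
    rcases L with _ | ⟨r, c⟩
    · simp [srule]
    · simp only [srule]
      split_ifs
      · exact hl r
      · simp
      · simp
  · exact Set.Subset.antisymm h1 ((hG.trans h2).trans langB_sub)
  · exact (h1.trans hG).trans h2

/-- For every m ∈ ℕ (positive), under the finite index restriction the
appearance checking feature does not increase the generative power of programmed
grammars: L_m(P, CF[−λ], ac) = L_m(P, CF[−λ]), with and without erasing rules. -/
theorem stmt19 (lf : Bool) (m : ℕ) (hm : 1 ≤ m) :
    PFamInd ℕ lf true m = PFamInd ℕ lf false m := by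
  ext L
  constructor
  · rintro ⟨G, hl, _, hE, hi⟩
    obtain ⟨G', h1, h2, h3, h4⟩ := sim_main G m hm hi
    exact ⟨G', fun h => h1 (hl h), fun _ => h2, h3 ▸ hE, h4⟩
  · rintro ⟨G, hl, _, hE, hi⟩
    exact ⟨G, hl, fun h => by simp at h, hE, hi⟩

end CDHybrid
end
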